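/- Let d ≥ 1, D := {1,...,d} and let B ⊆ D be nonempty. There is a constant C depending only on d such that for every measurable f : I^d → ℝ with ∫_{I^d} |f| log^{|B|-1}(1+|f|) < ∞ and every n = (n_1,...,n_d) with each n_j ≥ 2, one has ‖(L_{n_B}∘R_{n_{B'}})(f)‖_{weak-L^1(I^d)} ≤ C (1 + ∫_{I^d} |f| log^{|B|-1}(1+|f|)). -/

import Mathlib

open MeasureTheory Filter

noncomputable section

/-- The unit cube `[0,1)^d`. -/
def unitCube (d : ℕ) : Set (Fin d → ℝ) := Set.univ.pi fun _ => Set.Ico (0:ℝ) 1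

/-- Lebesgue measure restricted to the unit cube `[0,1)^d`. -/
def cubeMeasure (d : ℕ) : Measure (Fin d → ℝ) := volume.restrict (unitCube d)

/-- The `1`-periodic function equal to `1` on `[0,1/2)` and to `-1` on `[1/2,1)`. -/
def r0 (x : ℝ) : ℝ := if Int.fract x < 1/2 then 1 else -1

/-- The Rademacher functions. -/
def rademacher (n : ℕ) (x : ℝ) : ℝ := r0 (2 ^ n * x)

/-- The Walsh functions (in Paley enumeration, via binary digits). -/
def walsh (n : ℕ) (x : ℝ) : ℝ :=
  ∏ k ∈ Finset.range (n + 1), if n.testBit k then rademacher k x else 1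

/-- The Walsh–Dirichlet kernel `D_n`. -/
def dirichletKernel (n : ℕ) (x : ℝ) : ℝ := ∑ k ∈ Finset.range n, walsh k x

/-- `l_n = ∑_{k=1}^{n-1} 1/k`. -/
def logSum (n : ℕ) : ℝ := ∑ k ∈ Finset.Icc 1 (n - 1), (1 : ℝ) / k

/-- The Nörlund logarithmic kernel `F_n`. -/
def FKernel (n : ℕ) (u : ℝ) : ℝ :=
  (1 / logSum n) * ∑ i ∈ Finset.Ico 1 n, dirichletKernel (n - i) u / i

/-- The Riesz logarithmic kernel `G_n`. -/
def GKernel (n : ℕ) (u : ℝ) : ℝ :=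
  (1 / logSum n) * ∑ i ∈ Finset.Ico 1 n, dirichletKernel i u / i

/-- Walsh–Fourier coefficient of `f` on the unit cube. -/
def walshCoef {d : ℕ} (f : (Fin d → ℝ) → ℝ) (j : Fin d → ℕ) : ℝ :=
  ∫ x, f x * ∏ i, walsh (j i) (x i) ∂(cubeMeasure d)

/-- Rectangular partial sums of the multiple Walsh–Fourier series. -/
def rectPartialSum {d : ℕ} (f : (Fin d → ℝ) → ℝ) (N : Fin d → ℕ) (x : Fin d → ℝ) : ℝ :=
  ∑ j ∈ Fintype.piFinset (fun i => Finset.range (N i)),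
    walshCoef f j * ∏ i, walsh (j i) (x i)

/-- The mixed logarithmic means `(L_{n_B} ∘ R_{n_{B'}})(f)`. -/
def mixedLogMean {d : ℕ} (B : Finset (Fin d)) (f : (Fin d → ℝ) → ℝ)
    (n : Fin d → ℕ) (x : Fin d → ℝ) : ℝ :=
  (∏ j, logSum (n j))⁻¹ *
    ∑ i ∈ Fintype.piFinset (fun j => Finset.Ico 1 (n j)),
      rectPartialSum f (fun j => if j ∈ B then n j - i j else i j) x / ∏ j, (i j : ℝ)

/-- A Young function: convex, continuous, even, vanishing at `0`, with
`Q(u)/u → ∞` at `+∞` and `Q(u)/u → 0` at `0`. -/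
structure YoungFunction where
  toFun : ℝ → ℝ
  nonneg : ∀ u, 0 ≤ toFun u
  convexOn : ConvexOn ℝ Set.univ toFun
  continuous : Continuous toFun
  even : ∀ u, toFun (-u) = toFun u
  map_zero : toFun 0 = 0
  tendsto_atTop : Tendsto (fun u => toFun u / u) atTop atTop
  tendsto_zero : Tendsto (fun u => toFun u / u) (nhdsWithin 0 {(0:ℝ)}ᶜ) (nhds 0)

/-- The set of admissible constants `k` in the Luxemburg norm of `f`. -/
def orliczSet {d : ℕ} (Q : YoungFunction) (f : (Fin d → ℝ) → ℝ) : Set ℝ :=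
  {k | 0 < k ∧ Integrable (fun x => Q.toFun (|f x| / k)) (cubeMeasure d) ∧
    ∫ x, Q.toFun (|f x| / k) ∂(cubeMeasure d) ≤ 1}

/-- `f` belongs to the Orlicz space `L_Q(I^d)`. -/
def MemOrlicz {d : ℕ} (Q : YoungFunction) (f : (Fin d → ℝ) → ℝ) : Prop :=
  Measurable f ∧ (orliczSet Q f).Nonempty

/-- The Luxemburg norm on the Orlicz space `L_Q(I^d)`. -/
def orliczNorm {d : ℕ} (Q : YoungFunction) (f : (Fin d → ℝ) → ℝ) : ℝ :=
  sInf (orliczSet Q f)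

/-- `p_n = 2^{2n} + 2^{2n-2} + ⋯ + 2^0`. -/
def pIdx (n : ℕ) : ℕ := ∑ k ∈ Finset.range (n + 1), 4 ^ k

/-- `m̃ = ⌊ l_{p_{⌊m/2⌋}-1}/16 - 2^15 ⌋`. -/
def mTilde (m : ℕ) : ℤ := ⌊logSum (pIdx (m / 2) - 1) / 16 - 2 ^ 15⌋

/-- `m₀ = min{m : m̃ > 1}`. -/
def m₀ : ℕ := sInf {m : ℕ | 1 < mTilde m}

/-- The set `Ω_n`. -/
def Omega (n : ℕ) : Set ℝ :=
  ⋃ m ∈ Finset.Icc n (2 * n),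
    Set.Ico ((2:ℝ) ^ (-(m:ℤ) - 1) + (2:ℝ) ^ (-(m:ℤ) - mTilde m)) ((2:ℝ) ^ (-(m:ℤ)))

/-- `k`-th binary digit of `x` (the expansion not terminating in `1`'s). -/
def binDigit (k : ℕ) (x : ℝ) : ℕ := (⌊x * 2 ^ (k + 1)⌋).toNat % 2

/-- Dyadic addition on `[0,1)`. -/
def dyadicAdd (x t : ℝ) : ℝ :=
  ∑' k : ℕ, |(binDigit k x : ℝ) - (binDigit k t : ℝ)| / 2 ^ (k + 1)

/-- Dyadic convolution `f ∗ K` on `[0,1)`. -/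
def dyadicConv (f K : ℝ → ℝ) (x : ℝ) : ℝ :=
  ∫ t in Set.Ico (0:ℝ) 1, f t * K (dyadicAdd x t)

/-- Lebesgue measure restricted to `[0,1)`. -/
def unitMeasure : Measure ℝ := volume.restrict (Set.Ico (0:ℝ) 1)

/-- A set `A ⊆ L_Q(I^d)` is nowhere dense w.r.t. the Luxemburg norm. -/
def OrliczNowhereDense {d : ℕ} (Q : YoungFunction) (A : Set ((Fin d → ℝ) → ℝ)) : Prop :=
  ∀ f, MemOrlicz Q f → ∀ ε > 0, ∃ g, MemOrlicz Q g ∧ ∃ δ > 0,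
    (∀ h, MemOrlicz Q h → orliczNorm Q (h - g) < δ → orliczNorm Q (h - f) < ε) ∧
    (∀ h, MemOrlicz Q h → orliczNorm Q (h - g) < δ → h ∉ A)

/-- A set `A ⊆ L_Q(I^d)` is of first Baire category (meager) w.r.t. the Luxemburg norm. -/
def OrliczMeager {d : ℕ} (Q : YoungFunction) (A : Set ((Fin d → ℝ) → ℝ)) : Prop :=
  ∃ F : ℕ → Set ((Fin d → ℝ) → ℝ), (∀ k, OrliczNowhereDense Q (F k)) ∧ A ⊆ ⋃ k, F k

/-!
Only finitely many Walsh functions occur in a mixed logarithmic mean, so everything takes place on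
the finite power `(DyadicGroup N)^d`, where the mean is a tensor product of one-dimensional
convolutions.

Splitting `n = 2^A + m` repeatedly writes the Nörlund kernel as a combination, with coefficients
bounded by `l_n`, of the martingale difference kernels `r_A D_{2^A}` multiplied by the Walsh
function `w_n`, plus a remainder whose `L^1` norm is `O(l_n)`; the Riesz kernel only has such a
remainder. Convolution with a kernel of `L^1` norm at most one contracts all hinge integrals
`∫ (|f| - l)⁺`, hence every `L log^k L` functional. The martingale part is of weak
type `(1,1)` and of strong type `(2,2)`, and extrapolation between the two maps `L log^(k+1) L`
into `L log^k L`. Applying the variables one at a time, each Nörlund factor therefore costs one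
logarithm, except the last one, for which the weak type estimate is used.
-/

/-! ### Walsh sums of a sign sequence -/

section WalshSums

open Finset

variable {R : Type*} [CommRing R]

/-- The Paley–Walsh product `∏ r_j` over the binary digits `j` of `k`; for `r = (r_j(x))_j` it is
the Walsh function `w_k(x)`. Any sequence `r` is allowed, so that the same identities serve the
unit interval and its finite models. -/
def walshProd (r : ℕ → R) (k : ℕ) : R :=
  ∏ j ∈ range (k + 1), if k.testBit j then r j else 1

/-- The Walsh–Dirichlet sum `D_n = ∑_{k < n} w_k`. -/
def dirichletSum (r : ℕ → R) (n : ℕ) : R := ∑ k ∈ range n, walshProd r k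

/-- The unnormalized Walsh–Fejér sum `D_1 + ⋯ + D_n`. -/
def fejerSum (r : ℕ → R) (n : ℕ) : R := ∑ k ∈ range n, dirichletSum r (k + 1)

lemma walshProd_eq_prod_range (r : ℕ → R) {k A : ℕ} (hk : k < 2 ^ A) :
    walshProd r k = ∏ j ∈ range A, if k.testBit j then r j else 1 := by
  have eq_one_of_le {B j : ℕ} (hB : k < 2 ^ B) (hj : B ≤ j) :
      (if k.testBit j then r j else 1) = 1 := by
    simp [Nat.testBit_lt_two_pow (hB.trans_le (Nat.pow_le_pow_right two_pos hj))]
  have hk' : k < 2 ^ (k + 1) := Nat.lt_two_pow_self.trans (Nat.pow_lt_pow_succ one_lt_two)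
  have extend {B : ℕ} (hB : k < 2 ^ B) (C : ℕ) (hBC : B ≤ C) :
      ∏ j ∈ range B, (if k.testBit j then r j else 1) =
        ∏ j ∈ range C, if k.testBit j then r j else 1 :=
    prod_subset (range_mono hBC) fun j _ hj ↦ eq_one_of_le hB (by simpa using hj)
  rw [walshProd, extend hk' _ (le_max_left (k + 1) A), extend hk _ (le_max_right (k + 1) A)]

lemma walshProd_congr {r s : ℕ → R} {A k : ℕ} (h : ∀ j < A, r j = s j) (hk : k < 2 ^ A) :
    walshProd r k = walshProd s k := by
  rw [walshProd_eq_prod_range r hk, walshProd_eq_prod_range s hk]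
  exact prod_congr rfl fun j hj ↦ by rw [h j (mem_range.1 hj)]

lemma walshProd_mul (r s : ℕ → R) (k : ℕ) :
    walshProd (fun j ↦ r j * s j) k = walshProd r k * walshProd s k := by
  simp only [walshProd, ← prod_mul_distrib]
  exact prod_congr rfl fun j _ ↦ by split_ifs <;> simp

lemma walshProd_two_pow_add (r : ℕ → R) {k A : ℕ} (hk : k < 2 ^ A) :
    walshProd r (2 ^ A + k) = r A * walshProd r k := by
  have hlt : 2 ^ A + k < 2 ^ (A + 1) := by rw [pow_succ]; lia
  rw [walshProd_eq_prod_range r hlt, walshProd_eq_prod_range r hk, prod_range_succ, mul_comm]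
  congr 1
  · simp [Nat.testBit_two_pow_add_eq, Nat.testBit_lt_two_pow hk]
  · exact prod_congr rfl fun j hj ↦ by rw [Nat.testBit_two_pow_add_gt (mem_range.1 hj)]

lemma walshProd_two_pow_sub {r : ℕ → R} (hr : ∀ j, r j * r j = 1) {k A : ℕ} (hk : k < 2 ^ A) :
    walshProd r (2 ^ A - (k + 1)) = walshProd r (2 ^ A - 1) * walshProd r k := by
  rw [walshProd_eq_prod_range r (by lia : 2 ^ A - (k + 1) < 2 ^ A),
    walshProd_eq_prod_range r (by lia : 2 ^ A - 1 < 2 ^ A), walshProd_eq_prod_range r hk,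
    ← prod_mul_distrib]
  refine prod_congr rfl fun j hj ↦ ?_
  rw [Nat.testBit_two_pow_sub_succ hk, Nat.testBit_two_pow_sub_one]
  cases k.testBit j <;> simp [mem_range.1 hj, hr]

lemma dirichletSum_zero (r : ℕ → R) : dirichletSum r 0 = 0 := sum_range_zero _

lemma dirichletSum_one (r : ℕ → R) : dirichletSum r 1 = 1 := by simp [dirichletSum, walshProd]

lemma dirichletSum_succ (r : ℕ → R) (n : ℕ) :
    dirichletSum r (n + 1) = dirichletSum r n + walshProd r n := sum_range_succ _ _

lemma dirichletSum_congr {r s : ℕ → R} {A n : ℕ} (h : ∀ j < A, r j = s j) (hn : n ≤ 2 ^ A) :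
    dirichletSum r n = dirichletSum s n :=
  sum_congr rfl fun _ hk ↦ walshProd_congr h ((mem_range.1 hk).trans_le hn)

lemma dirichletSum_two_pow_add (r : ℕ → R) {m A : ℕ} (hm : m ≤ 2 ^ A) :
    dirichletSum r (2 ^ A + m) = dirichletSum r (2 ^ A) + r A * dirichletSum r m := by
  simp only [dirichletSum, sum_range_add, mul_sum]
  congr 1
  exact sum_congr rfl fun k hk ↦ walshProd_two_pow_add r ((mem_range.1 hk).trans_le hm)

lemma dirichletSum_two_pow_succ (r : ℕ → R) (A : ℕ) :
    dirichletSum r (2 ^ (A + 1)) = (1 + r A) * dirichletSum r (2 ^ A) := by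
  rw [pow_succ, mul_two, dirichletSum_two_pow_add r le_rfl]
  ring

lemma dirichletSum_two_pow (r : ℕ → R) (A : ℕ) :
    dirichletSum r (2 ^ A) = ∏ j ∈ range A, (1 + r j) := by
  induction A with
  | zero => simp [dirichletSum_one]
  | succ A ih => rw [dirichletSum_two_pow_succ, ih, prod_range_succ, mul_comm]

lemma dirichletSum_two_pow_sub {r : ℕ → R} (hr : ∀ j, r j * r j = 1) {j A : ℕ}
    (hj : j ≤ 2 ^ A) :
    dirichletSum r (2 ^ A - j) =
      dirichletSum r (2 ^ A) - walshProd r (2 ^ A - 1) * dirichletSum r j := by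
  induction j with
  | zero => simp [dirichletSum_zero]
  | succ j ih =>
    have hstep := dirichletSum_succ r (2 ^ A - (j + 1))
    rw [show 2 ^ A - (j + 1) + 1 = 2 ^ A - j by lia, ih (by lia),
      walshProd_two_pow_sub hr (k := j) (by lia)] at hstep
    rw [dirichletSum_succ]
    linear_combination -hstep

lemma walshProd_mul_dirichletSum_two_pow {r : ℕ → R} (hr : ∀ j, r j * r j = 1) {A k : ℕ}
    (hk : k < 2 ^ A) : walshProd r k * dirichletSum r (2 ^ A) = dirichletSum r (2 ^ A) := by
  rw [walshProd_eq_prod_range r hk, dirichletSum_two_pow, ← prod_mul_distrib]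
  refine prod_congr rfl fun j _ ↦ ?_
  split_ifs
  · rw [mul_add, hr, mul_one, add_comm]
  · rw [one_mul]

lemma fejerSum_congr {r s : ℕ → R} {A n : ℕ} (h : ∀ j < A, r j = s j) (hn : n ≤ 2 ^ A) :
    fejerSum r n = fejerSum s n :=
  sum_congr rfl fun _ hk ↦ dirichletSum_congr h ((mem_range.1 hk).trans_le hn)

lemma fejerSum_two_pow_add (r : ℕ → R) {m A : ℕ} (hm : m ≤ 2 ^ A) :
    fejerSum r (2 ^ A + m) =
      fejerSum r (2 ^ A) + m * dirichletSum r (2 ^ A) + r A * fejerSum r m := by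
  have hterm : ∀ k ∈ range m, dirichletSum r (2 ^ A + k + 1) =
      dirichletSum r (2 ^ A) + r A * dirichletSum r (k + 1) := fun k hk ↦ by
    rw [add_assoc, dirichletSum_two_pow_add r ((mem_range.1 hk).trans_le hm)]
  simp only [fejerSum, sum_range_add, sum_congr rfl hterm, sum_add_distrib, ← mul_sum, sum_const,
    card_range, nsmul_eq_mul]
  ring

lemma fejerSum_two_pow_succ (r : ℕ → R) (A : ℕ) :
    fejerSum r (2 ^ (A + 1)) = (1 + r A) * fejerSum r (2 ^ A) + 2 ^ A * dirichletSum r (2 ^ A) := by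
  rw [pow_succ, mul_two, fejerSum_two_pow_add r le_rfl]
  push_cast
  ring

end WalshSums

section RealWalshSums

open Finset

variable {r : ℕ → ℝ}

lemma abs_eq_one_of_mul_self {a : ℝ} (ha : a * a = 1) : |a| = 1 := by
  rw [← sq_eq_sq₀ (abs_nonneg a) zero_le_one, sq_abs, sq, ha, one_pow]

lemma abs_walshProd (hr : ∀ j, r j * r j = 1) (k : ℕ) : |walshProd r k| = 1 := by
  refine abs_eq_one_of_mul_self ?_
  rw [← walshProd_mul]
  simp [walshProd, hr]

lemma one_add_nonneg_of_mul_self {a : ℝ} (ha : a * a = 1) : 0 ≤ 1 + a := by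
  linarith [neg_abs_le a, abs_eq_one_of_mul_self ha]

lemma dirichletSum_two_pow_nonneg (hr : ∀ j, r j * r j = 1) (A : ℕ) :
    0 ≤ dirichletSum r (2 ^ A) := by
  rw [dirichletSum_two_pow]
  exact prod_nonneg fun j _ ↦ one_add_nonneg_of_mul_self (hr j)

lemma logSum_eq_sum_Ico (n : ℕ) : logSum n = ∑ i ∈ Ico 1 n, (1 : ℝ) / i := by
  rcases n with - | n
  · simp [logSum]
  · rfl

lemma logSum_nonneg (n : ℕ) : 0 ≤ logSum n := sum_nonneg fun i _ ↦ by positivity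

lemma logSum_mono : Monotone logSum := fun m n h ↦ by
  rw [logSum_eq_sum_Ico, logSum_eq_sum_Ico]
  exact sum_le_sum_of_subset_of_nonneg (Ico_subset_Ico le_rfl h) fun i _ _ ↦ by positivity

lemma one_le_logSum {n : ℕ} (hn : 2 ≤ n) : 1 ≤ logSum n := by
  simpa [logSum] using logSum_mono hn

lemma logSum_add_sum_range (m n : ℕ) :
    logSum (m + 1) + ∑ j ∈ range n, ((m : ℝ) + j + 1)⁻¹ = logSum (n + m + 1) := by
  rw [logSum_eq_sum_Ico, logSum_eq_sum_Ico,
    ← sum_Ico_consecutive _ (by lia : 1 ≤ m + 1) (by lia : m + 1 ≤ n + m + 1),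
    sum_Ico_eq_sum_range _ (m + 1), show n + m + 1 - (m + 1) = n by lia]
  congr 1
  refine sum_congr rfl fun j _ ↦ ?_
  push_cast
  rw [one_div, add_right_comm]

/-- The unnormalized Nörlund logarithmic sum `∑_{i=1}^{n-1} D_{n-i} / i`. -/
def norlundSum (r : ℕ → ℝ) (n : ℕ) : ℝ := ∑ i ∈ Ico 1 n, dirichletSum r (n - i) / i

/-- The unnormalized Riesz logarithmic sum `∑_{i=1}^{n-1} D_i / i`. -/
def rieszSum (r : ℕ → ℝ) (n : ℕ) : ℝ := ∑ i ∈ Ico 1 n, dirichletSum r i / i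

/-- The shifted Riesz sum `∑_{j=1}^{n} D_j / (m + j)`: up to a Walsh factor, the error made when
the leading binary digit of the index of a Nörlund sum is split off. -/
def shiftedRieszSum (r : ℕ → ℝ) (m n : ℕ) : ℝ :=
  ∑ j ∈ range n, ((m : ℝ) + j + 1)⁻¹ * dirichletSum r (j + 1)

lemma rieszSum_succ_eq_shiftedRieszSum (r : ℕ → ℝ) (n : ℕ) :
    rieszSum r (n + 1) = shiftedRieszSum r 0 n := by
  rw [rieszSum, sum_Ico_eq_sum_range, shiftedRieszSum]
  refine sum_congr rfl fun j _ ↦ ?_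
  rw [add_comm 1 j]
  push_cast
  ring

lemma sum_Ico_one_succ_dirichletSum (r : ℕ → ℝ) {m A : ℕ} (hm : m < 2 ^ A) :
    ∑ i ∈ Ico 1 (m + 1), dirichletSum r (2 ^ A + m - i) / i =
      logSum (m + 1) * dirichletSum r (2 ^ A) + r A * norlundSum r m := by
  have hnorlund : norlundSum r m = ∑ i ∈ Ico 1 (m + 1), dirichletSum r (m - i) / i := by
    rcases m.eq_zero_or_pos with rfl | hm0
    · simp [norlundSum]
    · simp [norlundSum, sum_Ico_succ_top hm0, dirichletSum_zero]
  rw [hnorlund, logSum_eq_sum_Ico, sum_mul, mul_sum, ← sum_add_distrib]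
  refine sum_congr rfl fun i hi ↦ ?_
  have hi := mem_Ico.1 hi
  rw [Nat.add_sub_assoc (by lia), dirichletSum_two_pow_add r (by lia)]
  ring

lemma sum_Ico_two_pow_add_dirichletSum (hr : ∀ j, r j * r j = 1) (m A : ℕ) :
    ∑ i ∈ Ico (m + 1) (2 ^ A + m), dirichletSum r (2 ^ A + m - i) / i =
      (∑ j ∈ range (2 ^ A - 1), ((m : ℝ) + j + 1)⁻¹) * dirichletSum r (2 ^ A) -
        walshProd r (2 ^ A - 1) * shiftedRieszSum r m (2 ^ A - 1) := by
  rw [sum_Ico_eq_sum_range, show 2 ^ A + m - (m + 1) = 2 ^ A - 1 by lia, shiftedRieszSum, sum_mul,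
    mul_sum, ← sum_sub_distrib]
  refine sum_congr rfl fun j hj ↦ ?_
  have hj := mem_range.1 hj
  rw [show 2 ^ A + m - (m + 1 + j) = 2 ^ A - (j + 1) by lia, dirichletSum_two_pow_sub hr (by lia)]
  push_cast
  ring

lemma norlundSum_two_pow_add (hr : ∀ j, r j * r j = 1) {m A : ℕ} (hm : m < 2 ^ A) :
    norlundSum r (2 ^ A + m) = logSum (2 ^ A + m) * dirichletSum r (2 ^ A)
      - walshProd r (2 ^ A - 1) * shiftedRieszSum r m (2 ^ A - 1) + r A * norlundSum r m := by
  have hlog := logSum_add_sum_range m (2 ^ A - 1)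
  rw [show 2 ^ A - 1 + m + 1 = 2 ^ A + m by lia] at hlog
  rw [norlundSum, ← sum_Ico_consecutive _ (by lia : 1 ≤ m + 1) (by lia : m + 1 ≤ 2 ^ A + m),
    sum_Ico_one_succ_dirichletSum r hm, sum_Ico_two_pow_add_dirichletSum hr]
  linear_combination dirichletSum r (2 ^ A) * hlog

end RealWalshSums

lemma dyadic_induction {P : ℕ → Prop} (zero : P 0)
    (two_pow_add : ∀ A m, m < 2 ^ A → P m → P (2 ^ A + m)) (n : ℕ) : P n := by
  induction n using Nat.strong_induction_on with
  | _ n ih =>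
    rcases n.eq_zero_or_pos with rfl | hn
    · exact zero
    · have hle : 2 ^ Nat.log 2 n ≤ n := Nat.pow_log_le_self 2 hn.ne'
      have hlt : n < 2 ^ Nat.log 2 n * 2 := Nat.lt_pow_succ_log_self one_lt_two n
      obtain ⟨m, hm⟩ := Nat.exists_eq_add_of_le hle
      rw [hm]
      exact two_pow_add _ _ (by lia) (ih m (by have := Nat.two_pow_pos (Nat.log 2 n); lia))

section NorlundDecomposition

open Finset

variable {r : ℕ → ℝ}

/-- The coefficient of `r_A D_{2^A}` in the principal part of the `n`-th Nörlund sum: nonzero only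
at the binary digits of `n`, where it is the harmonic sum of `n` truncated above that digit. -/
def norlundCoef (n A : ℕ) : ℝ := if n.testBit A then logSum (n % 2 ^ (A + 1)) else 0

lemma norlundCoef_two_pow_add {m A : ℕ} (hm : m < 2 ^ A) (B : ℕ) :
    norlundCoef (2 ^ A + m) B = (if B = A then logSum (2 ^ A + m) else 0) + norlundCoef m B := by
  have hlt : 2 ^ A + m < 2 ^ (A + 1) := by rw [pow_succ]; lia
  rcases lt_trichotomy B A with hB | rfl | hB
  · have hmod : (2 ^ A + m) % 2 ^ (B + 1) = m % 2 ^ (B + 1) := by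
      obtain ⟨c, hc⟩ := pow_dvd_pow 2 (Nat.succ_le_of_lt hB)
      rw [hc, Nat.mul_add_mod]
    simp [norlundCoef, Nat.testBit_two_pow_add_gt hB, hmod, hB.ne]
  · simp [norlundCoef, Nat.testBit_two_pow_add_eq, Nat.testBit_lt_two_pow hm, Nat.mod_eq_of_lt hlt]
  · have hle : 2 ^ (A + 1) ≤ 2 ^ B := Nat.pow_le_pow_right two_pos hB
    simp [norlundCoef, Nat.testBit_lt_two_pow (hlt.trans_le hle),
      Nat.testBit_lt_two_pow (show m < 2 ^ B by lia), hB.ne']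

lemma abs_norlundCoef_le (n A : ℕ) : |norlundCoef n A| ≤ logSum n := by
  rw [norlundCoef]
  split_ifs
  · rw [abs_of_nonneg (logSum_nonneg _)]
    exact logSum_mono (Nat.mod_le _ _)
  · simpa using logSum_nonneg n

/-- The part of the `n`-th Nörlund sum (divided by `w_n`) that is a transform of the Walsh
martingale differences `r_A D_{2^A}`, `A < N`. -/
def norlundPrincipal (r : ℕ → ℝ) (N n : ℕ) : ℝ :=
  ∑ A ∈ range N, norlundCoef n A * (r A * dirichletSum r (2 ^ A))

/-- What is left of the `n`-th Nörlund sum after its principal part is removed; it is bounded in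
`L¹` by the harmonic sum of `n`. -/
def norlundRemainder (r : ℕ → ℝ) (N n : ℕ) : ℝ :=
  norlundSum r n - walshProd r n * norlundPrincipal r N n

lemma norlundPrincipal_two_pow_add (r : ℕ → ℝ) {N m A : ℕ} (hA : A < N) (hm : m < 2 ^ A) :
    norlundPrincipal r N (2 ^ A + m) =
      logSum (2 ^ A + m) * (r A * dirichletSum r (2 ^ A)) + norlundPrincipal r N m := by
  simp only [norlundPrincipal, norlundCoef_two_pow_add hm, add_mul, sum_add_distrib, ite_mul,
    zero_mul, sum_ite_eq', mem_range.2 hA, if_true]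

lemma norlundRemainder_two_pow_add (hr : ∀ j, r j * r j = 1) {N m A : ℕ} (hA : A < N)
    (hm : m < 2 ^ A) :
    norlundRemainder r N (2 ^ A + m) =
      r A * norlundRemainder r N m - walshProd r (2 ^ A - 1) * shiftedRieszSum r m (2 ^ A - 1) := by
  have habsorb := walshProd_mul_dirichletSum_two_pow hr hm
  rw [norlundRemainder, norlundRemainder, norlundSum_two_pow_add hr hm,
    norlundPrincipal_two_pow_add r hA hm, walshProd_two_pow_add r hm]
  linear_combination -logSum (2 ^ A + m) * (habsorb + walshProd r m * dirichletSum r (2 ^ A) * hr A)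

end NorlundDecomposition

/-! ### Kernel bounds on the finite dyadic group -/

section DyadicGroup

open Finset
open scoped BigOperators

/-- The dyadic group with `N` digits, the finite model of `[0,1)` at scale `2^{-N}`. -/
abbrev DyadicGroup (N : ℕ) := Fin N → ZMod 2

variable {N : ℕ}

/-- The Rademacher functions on the dyadic group, extended by `1` beyond the last digit. -/
def digitSign (x : DyadicGroup N) (j : ℕ) : ℝ :=
  if h : j < N then (if x ⟨j, h⟩ = 0 then 1 else -1) else 1

/-- The element of the dyadic group whose only nonzero digit is the `A`-th. -/
def digitUnit (A : ℕ) : DyadicGroup N := fun i ↦ if (i : ℕ) = A then 1 else 0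

lemma digitSign_mul_self (x : DyadicGroup N) (j : ℕ) : digitSign x j * digitSign x j = 1 := by
  unfold digitSign
  split_ifs <;> norm_num

lemma zmod_two_eq_zero_or_one : ∀ a : ZMod 2, a = 0 ∨ a = 1 := by decide

lemma digitSign_sub (x t : DyadicGroup N) (j : ℕ) :
    digitSign (x - t) j = digitSign x j * digitSign t j := by
  have hsign : ∀ a b : ZMod 2, (if a - b = 0 then (1 : ℝ) else -1) =
      (if a = 0 then 1 else -1) * (if b = 0 then 1 else -1) := by
    intro a b
    rcases zmod_two_eq_zero_or_one a with rfl | rfl <;>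
      rcases zmod_two_eq_zero_or_one b with rfl | rfl <;> simp
  by_cases h : j < N
  · simpa only [digitSign, h, dif_pos, Pi.sub_apply] using hsign _ _
  · simp [digitSign, h]

lemma walshProd_digitSign_sub (x t : DyadicGroup N) (k : ℕ) :
    walshProd (digitSign (x - t)) k = walshProd (digitSign x) k * walshProd (digitSign t) k := by
  rw [← walshProd_mul]
  exact congrArg (walshProd · k) (funext (digitSign_sub x t))

lemma digitSign_add_digitUnit_of_ne (x : DyadicGroup N) {A j : ℕ} (h : j ≠ A) :
    digitSign (x + digitUnit A) j = digitSign x j := by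
  unfold digitSign digitUnit
  split_ifs <;> simp_all

lemma digitSign_add_digitUnit (x : DyadicGroup N) {A : ℕ} (hA : A < N) :
    digitSign (x + digitUnit A) A = -digitSign x A := by
  have hflip : ∀ a : ZMod 2, (if a + 1 = 0 then (1 : ℝ) else -1) = -(if a = 0 then 1 else -1) := by
    intro a
    rcases zmod_two_eq_zero_or_one a with rfl | rfl <;> simp [CharTwo.add_self_eq_zero]
  simpa [digitSign, digitUnit, hA] using hflip (x ⟨A, hA⟩)

lemma dirichletSum_add_digitUnit {A n : ℕ} (hn : n ≤ 2 ^ A) (x : DyadicGroup N) :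
    dirichletSum (digitSign (x + digitUnit A)) n = dirichletSum (digitSign x) n :=
  dirichletSum_congr (fun _ hj ↦ digitSign_add_digitUnit_of_ne x hj.ne) hn

lemma fejerSum_add_digitUnit {A n : ℕ} (hn : n ≤ 2 ^ A) (x : DyadicGroup N) :
    fejerSum (digitSign (x + digitUnit A)) n = fejerSum (digitSign x) n :=
  fejerSum_congr (fun _ hj ↦ digitSign_add_digitUnit_of_ne x hj.ne) hn

lemma expect_one_add_digitSign_mul {A : ℕ} (hA : A < N) {g : DyadicGroup N → ℝ}
    (hg : ∀ x, g (x + digitUnit A) = g x) :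
    𝔼 x, (1 + digitSign x A) * g x = 𝔼 x, g x := by
  have hodd : 𝔼 x, digitSign x A * g x = -𝔼 x, digitSign x A * g x := by
    rw [← expect_neg_distrib]
    refine Fintype.expect_equiv (Equiv.addRight (digitUnit A)) _ _ fun x ↦ ?_
    simp [digitSign_add_digitUnit x hA, hg]
  simp only [add_mul, one_mul, expect_add_distrib]
  linarith

lemma expect_dirichletSum_two_pow {A : ℕ} (hA : A ≤ N) :
    𝔼 x : DyadicGroup N, dirichletSum (digitSign x) (2 ^ A) = 1 := by
  induction A with
  | zero => simp [dirichletSum_one]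
  | succ A ih =>
    simp only [dirichletSum_two_pow_succ]
    rw [expect_one_add_digitSign_mul hA (dirichletSum_add_digitUnit le_rfl), ih (by lia)]

lemma expect_abs_fejerSum_two_pow_le {A : ℕ} (hA : A ≤ N) :
    𝔼 x : DyadicGroup N, |fejerSum (digitSign x) (2 ^ A)| ≤ 2 ^ A := by
  induction A with
  | zero => simp [fejerSum, dirichletSum_one]
  | succ A ih =>
    calc 𝔼 x : DyadicGroup N, |fejerSum (digitSign x) (2 ^ (A + 1))|
        ≤ 𝔼 x : DyadicGroup N, ((1 + digitSign x A) * |fejerSum (digitSign x) (2 ^ A)|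
            + 2 ^ A * dirichletSum (digitSign x) (2 ^ A)) := by
          refine expect_le_expect fun x _ ↦ ?_
          rw [fejerSum_two_pow_succ]
          refine (abs_add_le _ _).trans_eq ?_
          rw [abs_mul, abs_mul, abs_of_nonneg (one_add_nonneg_of_mul_self (digitSign_mul_self x A)),
            abs_of_nonneg (dirichletSum_two_pow_nonneg (digitSign_mul_self x) A),
            abs_of_nonneg (by positivity : (0 : ℝ) ≤ 2 ^ A)]
      _ = 𝔼 x : DyadicGroup N, |fejerSum (digitSign x) (2 ^ A)| + 2 ^ A := by
          rw [expect_add_distrib, ← mul_expect, expect_dirichletSum_two_pow (by lia), mul_one,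
            expect_one_add_digitSign_mul hA fun x ↦ by rw [fejerSum_add_digitUnit le_rfl]]
      _ ≤ 2 ^ (A + 1) := by rw [pow_succ]; linarith [ih (by lia)]

lemma lt_of_two_pow_add_lt {A m : ℕ} (h : 2 ^ A + m < 2 ^ N) : A < N :=
  (Nat.pow_lt_pow_iff_right one_lt_two).1 (by lia : 2 ^ A < 2 ^ N)

lemma expect_abs_fejerSum_le {n : ℕ} (hn : n < 2 ^ N) :
    𝔼 x : DyadicGroup N, |fejerSum (digitSign x) n| ≤ 2 * n := by
  induction n using dyadic_induction with
  | zero => simp [fejerSum]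
  | two_pow_add A m hm ih =>
    have hA : A < N := lt_of_two_pow_add_lt hn
    have hpointwise (x : DyadicGroup N) : |fejerSum (digitSign x) (2 ^ A + m)| ≤
        |fejerSum (digitSign x) (2 ^ A)| + m * dirichletSum (digitSign x) (2 ^ A) +
          |fejerSum (digitSign x) m| := by
      rw [fejerSum_two_pow_add _ hm.le]
      refine (abs_add_three _ _ _).trans_eq ?_
      rw [abs_mul, abs_mul, abs_eq_one_of_mul_self (digitSign_mul_self x A), one_mul, Nat.abs_cast,
        abs_of_nonneg (dirichletSum_two_pow_nonneg (digitSign_mul_self x) A)]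
    have hsum := expect_le_expect fun x (_ : x ∈ univ) ↦ hpointwise x
    rw [expect_add_distrib, expect_add_distrib, ← mul_expect,
      expect_dirichletSum_two_pow hA.le] at hsum
    have hm' : (m : ℝ) ≤ 2 ^ A := by exact_mod_cast hm.le
    push_cast
    linarith [expect_abs_fejerSum_two_pow_le hA.le, ih (by lia)]

lemma sum_range_mul_eq_abel {R : Type*} [CommRing R] (b d : ℕ → R) (n : ℕ) :
    ∑ j ∈ range n, b j * d j = b n * ∑ i ∈ range n, d i +
      ∑ j ∈ range n, (b j - b (j + 1)) * ∑ i ∈ range (j + 1), d i := by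
  induction n with
  | zero => simp
  | succ n ih =>
    rw [sum_range_succ, ih, sum_range_succ _ n,
      sum_range_succ (fun j ↦ (b j - b (j + 1)) * ∑ i ∈ range (j + 1), d i), sum_range_succ d]
    ring

lemma expect_abs_sum_mul_dirichletSum_le {n : ℕ} (hn : n < 2 ^ N) {b : ℕ → ℝ} (hb : Antitone b)
    (hb0 : ∀ j, 0 ≤ b j) :
    𝔼 x : DyadicGroup N, |∑ j ∈ range n, b j * dirichletSum (digitSign x) (j + 1)| ≤
      2 * ∑ j ∈ range n, b j := by
  have hdiff (j : ℕ) : 0 ≤ b j - b (j + 1) := sub_nonneg.2 (hb j.le_succ)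
  have hpointwise (x : DyadicGroup N) :
      |∑ j ∈ range n, b j * dirichletSum (digitSign x) (j + 1)| ≤
        b n * |fejerSum (digitSign x) n| +
          ∑ j ∈ range n, (b j - b (j + 1)) * |fejerSum (digitSign x) (j + 1)| := by
    rw [sum_range_mul_eq_abel]
    refine (abs_add_le _ _).trans (add_le_add ?_ ((abs_sum_le_sum_abs _ _).trans
      (sum_le_sum fun j _ ↦ ?_)))
    · rw [abs_mul, abs_of_nonneg (hb0 n), fejerSum]
    · rw [abs_mul, abs_of_nonneg (hdiff j), fejerSum]
  have habel := sum_range_mul_eq_abel b (fun _ ↦ 1) n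
  simp only [mul_one, sum_const, card_range, nsmul_eq_mul] at habel
  calc 𝔼 x : DyadicGroup N, |∑ j ∈ range n, b j * dirichletSum (digitSign x) (j + 1)|
      ≤ b n * 𝔼 x : DyadicGroup N, |fejerSum (digitSign x) n| + ∑ j ∈ range n,
          (b j - b (j + 1)) * 𝔼 x : DyadicGroup N, |fejerSum (digitSign x) (j + 1)| := by
        simp only [mul_expect, ← expect_sum_comm, ← expect_add_distrib]
        exact expect_le_expect fun x _ ↦ hpointwise x
    _ ≤ b n * (2 * n) + ∑ j ∈ range n, (b j - b (j + 1)) * (2 * (j + 1 : ℕ)) := by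
        gcongr with j hj
        · exact hb0 n
        · exact expect_abs_fejerSum_le hn
        · exact hdiff j
        · exact expect_abs_fejerSum_le (by have := mem_range.1 hj; lia)
    _ = 2 * ∑ j ∈ range n, b j := by
        rw [habel, mul_add, mul_sum]
        congr 1
        · ring
        · exact sum_congr rfl fun j _ ↦ by ring

lemma expect_abs_shiftedRieszSum_le {m n : ℕ} (hn : n < 2 ^ N) :
    𝔼 x : DyadicGroup N, |shiftedRieszSum (digitSign x) m n| ≤
      2 * (logSum (n + m + 1) - logSum (m + 1)) := by
  rw [← logSum_add_sum_range, add_sub_cancel_left]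
  refine expect_abs_sum_mul_dirichletSum_le hn (fun i j hij ↦ ?_) fun j ↦ by positivity
  exact inv_anti₀ (by positivity) (by gcongr)

lemma expect_abs_rieszSum_le {n : ℕ} (hn : n < 2 ^ N) :
    𝔼 x : DyadicGroup N, |rieszSum (digitSign x) n| ≤ 2 * logSum n := by
  rcases n with - | n
  · simp [rieszSum, logSum]
  · simp only [rieszSum_succ_eq_shiftedRieszSum]
    simpa [logSum] using expect_abs_shiftedRieszSum_le (m := 0) (by lia : n < 2 ^ N)

lemma expect_abs_norlundRemainder_le {n : ℕ} (hn : n < 2 ^ N) :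
    𝔼 x : DyadicGroup N, |norlundRemainder (digitSign x) N n| ≤ 2 * logSum n := by
  induction n using dyadic_induction with
  | zero => simp [norlundRemainder, norlundSum, norlundPrincipal, norlundCoef, logSum]
  | two_pow_add A m hm ih =>
    have hpointwise (x : DyadicGroup N) : |norlundRemainder (digitSign x) N (2 ^ A + m)| ≤
        |norlundRemainder (digitSign x) N m| + |shiftedRieszSum (digitSign x) m (2 ^ A - 1)| := by
      rw [norlundRemainder_two_pow_add (digitSign_mul_self x) (lt_of_two_pow_add_lt hn) hm]
      refine (abs_sub _ _).trans_eq ?_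
      rw [abs_mul, abs_mul, abs_eq_one_of_mul_self (digitSign_mul_self x A),
        abs_walshProd (digitSign_mul_self x), one_mul, one_mul]
    have hsum := expect_le_expect fun x (_ : x ∈ univ) ↦ hpointwise x
    rw [expect_add_distrib] at hsum
    have hshift := expect_abs_shiftedRieszSum_le (N := N) (m := m) (n := 2 ^ A - 1) (by lia)
    rw [show 2 ^ A - 1 + m + 1 = 2 ^ A + m by lia] at hshift
    linarith [ih (by lia), logSum_mono m.le_succ]

end DyadicGroup

/-! ### Burkholder's function -/

section Burkholder

/-- Concavity of `U` along every line of slope at most one in absolute value, in midpoint form. -/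
def IsZigzagConcave (U : ℝ → ℝ → ℝ) : Prop :=
  ∀ x y h ε : ℝ, |ε| ≤ 1 → U (x + h) (y + ε * h) + U (x - h) (y - ε * h) ≤ 2 * U x y

/-- Burkholder's function for the weak-type inequality: the least zigzag concave majorant of
`(x, y) ↦ 1_{|y| ≥ 1} - 2|x|`. -/
def burkholderFun (x y : ℝ) : ℝ := if |x| + |y| ≤ 1 then y ^ 2 - x ^ 2 else 1 - 2 * |x|

lemma burkholderFun_neg_neg (x y : ℝ) : burkholderFun (-x) (-y) = burkholderFun x y := by
  simp [burkholderFun]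

lemma burkholderFun_le_one_sub (x y : ℝ) : burkholderFun x y ≤ 1 - 2 * |x| := by
  unfold burkholderFun
  split_ifs with h
  · rw [← sq_abs x, ← sq_abs y]
    nlinarith [abs_nonneg x, abs_nonneg y]
  · exact le_rfl

lemma burkholderFun_le_sq_sub_sq {x : ℝ} (hx : |x| ≤ 1) (y : ℝ) :
    burkholderFun x y ≤ y ^ 2 - x ^ 2 := by
  unfold burkholderFun
  split_ifs with h
  · exact le_rfl
  · rw [← sq_abs x, ← sq_abs y]
    nlinarith [abs_nonneg x, abs_nonneg y]

lemma indicator_sub_le_burkholderFun (x y : ℝ) :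
    (if 1 < |y| then 1 else 0) - 2 * |x| ≤ burkholderFun x y := by
  unfold burkholderFun
  split_ifs with hy hxy hxy
  · linarith [abs_nonneg x]
  · exact le_rfl
  · rw [← sq_abs x]
    nlinarith [sq_nonneg y, abs_nonneg x, abs_nonneg y]
  · linarith

lemma burkholderFun_zero_right_nonpos (x : ℝ) : burkholderFun x 0 ≤ 0 := by
  unfold burkholderFun
  split_ifs with h
  · nlinarith
  · rw [abs_zero, add_zero, not_le] at h
    linarith

lemma isZigzagConcave_sq_sub_sq : IsZigzagConcave fun x y ↦ y ^ 2 - x ^ 2 := by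
  intro x y h ε hε
  have hε2 : ε ^ 2 ≤ 1 := (sq_le_one_iff_abs_le_one ε).2 hε
  nlinarith [mul_nonneg (sub_nonneg.2 hε2) (sq_nonneg h)]

lemma sq_sub_sq_le_of_abs_le {s y h ε : ℝ} (hy : |y| ≤ s) (hs : s < h) (hε : |ε| ≤ 1) :
    (h - s) ^ 2 - (y + ε * h) ^ 2 ≤ h ^ 2 * (1 - ε ^ 2) := by
  have hs0 : 0 ≤ s := (abs_nonneg y).trans hy
  have hh : 0 < h := hs0.trans_lt hs
  have hlower : |ε| * h - s ≤ |y + ε * h| := by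
    have := abs_sub_abs_le_abs_sub (ε * h) (-y)
    rw [abs_mul, abs_neg, abs_of_pos hh, sub_neg_eq_add, add_comm (ε * h)] at this
    linarith
  rw [← sq_abs ε, ← sq_abs (y + ε * h)]
  rcases le_total s (|ε| * h) with hsε | hsε
  · have hsq : (|ε| * h - s) ^ 2 ≤ |y + ε * h| ^ 2 :=
      pow_le_pow_left₀ (by linarith) hlower 2
    nlinarith [mul_nonneg (mul_nonneg (sub_nonneg.2 hε) hh.le) hs0]
  · have hsq : (h - s) ^ 2 ≤ (h * (1 - |ε|)) ^ 2 := pow_le_pow_left₀ (by linarith) (by linarith) 2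
    have hfactor : 0 ≤ h ^ 2 * (|ε| * (1 - |ε|)) :=
      mul_nonneg (sq_nonneg h) (mul_nonneg (abs_nonneg ε) (sub_nonneg.2 hε))
    nlinarith [sq_nonneg |y + ε * h|]

lemma burkholderFun_zigzag_of_one_lt_add {x y h ε : ℝ} (hε : |ε| ≤ 1) (hxy : |x| + |y| ≤ 1)
    (hright : 1 < x + h) (hleft : |x - h| ≤ 1) :
    burkholderFun (x + h) (y + ε * h) + burkholderFun (x - h) (y - ε * h) ≤
      2 * (y ^ 2 - x ^ 2) := by
  have hy : |y| ≤ 1 - x := by linarith [le_abs_self x]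
  have hfar : burkholderFun (x + h) (y + ε * h) ≤ 1 - 2 * (x + h) :=
    (burkholderFun_le_one_sub _ _).trans (by linarith [le_abs_self (x + h)])
  have hε2 : ε ^ 2 ≤ 1 := (sq_le_one_iff_abs_le_one ε).2 hε
  nlinarith [burkholderFun_le_sq_sub_sq hleft (y - ε * h),
    sq_sub_sq_le_of_abs_le hy (by linarith : 1 - x < h) hε,
    mul_nonneg (sq_nonneg h) (sub_nonneg.2 hε2)]

lemma burkholderFun_zigzag_of_one_lt_abs_add {x y h ε : ℝ} (hε : |ε| ≤ 1) (hxy : |x| + |y| ≤ 1)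
    (hright : 1 < |x + h|) (hleft : |x - h| ≤ 1) :
    burkholderFun (x + h) (y + ε * h) + burkholderFun (x - h) (y - ε * h) ≤
      2 * (y ^ 2 - x ^ 2) := by
  rcases lt_abs.1 hright with hpos | hneg
  · exact burkholderFun_zigzag_of_one_lt_add hε hxy hpos hleft
  · have hflip := burkholderFun_zigzag_of_one_lt_add (x := -x) (y := -y) (h := -h) hε
      (by simpa using hxy) (by linarith)
      (by rwa [← abs_neg, show -(-x - -h) = x - h by ring])
    rwa [show -x + -h = -(x + h) by ring, show -y + ε * -h = -(y + ε * h) by ring,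
      show -x - -h = -(x - h) by ring, show -y - ε * -h = -(y - ε * h) by ring,
      burkholderFun_neg_neg, burkholderFun_neg_neg, neg_sq, neg_sq] at hflip

lemma isZigzagConcave_burkholderFun : IsZigzagConcave burkholderFun := by
  intro x y h ε hε
  by_cases hxy : |x| + |y| ≤ 1
  · rw [show burkholderFun x y = y ^ 2 - x ^ 2 by simp [burkholderFun, hxy]]
    rcases le_or_gt |x + h| 1 with hright | hright <;> rcases le_or_gt |x - h| 1 with hleft | hleft
    · exact (add_le_add (burkholderFun_le_sq_sub_sq hright _)
        (burkholderFun_le_sq_sub_sq hleft _)).trans (isZigzagConcave_sq_sub_sq x y h ε hε)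
    · rw [add_comm]
      simpa only [← sub_eq_add_neg, mul_neg, sub_neg_eq_add] using
        burkholderFun_zigzag_of_one_lt_abs_add (h := -h) hε hxy (by rwa [← sub_eq_add_neg])
          (by rwa [sub_neg_eq_add])
    · exact burkholderFun_zigzag_of_one_lt_abs_add hε hxy hright hleft
    · have hx : x ^ 2 ≤ 1 := (sq_le_one_iff_abs_le_one x).2 (by linarith [abs_nonneg y])
      linarith [burkholderFun_le_one_sub (x + h) (y + ε * h),
        burkholderFun_le_one_sub (x - h) (y - ε * h), sq_nonneg y]
  · rw [show burkholderFun x y = 1 - 2 * |x| by simp [burkholderFun, hxy]]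
    have htriangle := abs_add_le (x + h) (x - h)
    rw [show x + h + (x - h) = 2 * x by ring, abs_mul, abs_two] at htriangle
    linarith [burkholderFun_le_one_sub (x + h) (y + ε * h),
      burkholderFun_le_one_sub (x - h) (y - ε * h)]

end Burkholder

/-! ### Convolution and dyadic martingale transforms -/

section Convolution

open Finset
open scoped BigOperators

variable {G : Type*} [Fintype G] [AddCommGroup G]

/-- Convolution on a finite abelian group with respect to its uniform probability measure. -/
def groupConv (K f : G → ℝ) (x : G) : ℝ := 𝔼 t, f t * K (x - t)

lemma groupConv_add_left (K L f : G → ℝ) (x : G) :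
    groupConv (fun y ↦ K y + L y) f x = groupConv K f x + groupConv L f x := by
  simp only [groupConv, mul_add, expect_add_distrib]

lemma groupConv_const_mul (c : ℝ) (K f : G → ℝ) (x : G) :
    groupConv (fun y ↦ c * K y) f x = c * groupConv K f x := by
  simp only [groupConv, mul_expect, mul_left_comm]

lemma groupConv_sum {ι : Type*} (s : Finset ι) (K : ι → G → ℝ) (f : G → ℝ) (x : G) :
    groupConv (fun y ↦ ∑ i ∈ s, K i y) f x = ∑ i ∈ s, groupConv (K i) f x := by
  simp only [groupConv, mul_sum, expect_sum_comm]

lemma groupConv_add_right (K f g : G → ℝ) (x : G) :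
    groupConv K (fun t ↦ f t + g t) x = groupConv K f x + groupConv K g x := by
  simp only [groupConv, add_mul, expect_add_distrib]

lemma groupConv_translate {K : G → ℝ} {u : G} {c : ℝ} (hK : ∀ y, K (y + u) = c * K y)
    (f : G → ℝ) (x : G) : groupConv K f (x + u) = c * groupConv K f x := by
  simp only [groupConv, add_sub_right_comm, hK, mul_expect, mul_left_comm c]

end Convolution

section MartingaleTransform

open Finset
open scoped BigOperators

variable {N : ℕ}

/-- The average of `f` over the dyadic cube of generation `A` around `x`, written as convolution
with the Dirichlet kernel `D_{2^A}`. -/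
def dyadicMean (A : ℕ) (f : DyadicGroup N → ℝ) : DyadicGroup N → ℝ :=
  groupConv (fun y ↦ dirichletSum (digitSign y) (2 ^ A)) f

/-- The dyadic martingale difference between the generations `A` and `A + 1`. -/
def dyadicDiff (A : ℕ) (f : DyadicGroup N → ℝ) : DyadicGroup N → ℝ :=
  groupConv (fun y ↦ digitSign y A * dirichletSum (digitSign y) (2 ^ A)) f

/-- The transform of the dyadic martingale of `f` by the deterministic multipliers `ε`, stopped
after `n` steps. -/
def martTransform (ε : ℕ → ℝ) (n : ℕ) (f : DyadicGroup N → ℝ) (x : DyadicGroup N) : ℝ :=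
  ∑ A ∈ range n, ε A * dyadicDiff A f x

lemma dyadicMean_succ (A : ℕ) (f : DyadicGroup N → ℝ) (x : DyadicGroup N) :
    dyadicMean (A + 1) f x = dyadicMean A f x + dyadicDiff A f x := by
  simp only [dyadicMean, dyadicDiff, ← groupConv_add_left, dirichletSum_two_pow_succ, add_mul,
    one_mul]

lemma martTransform_succ (ε : ℕ → ℝ) (n : ℕ) (f : DyadicGroup N → ℝ) (x : DyadicGroup N) :
    martTransform ε (n + 1) f x = martTransform ε n f x + ε n * dyadicDiff n f x :=
  sum_range_succ _ _

lemma dyadicMean_add_digitUnit (f : DyadicGroup N → ℝ) (A : ℕ) (x : DyadicGroup N) :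
    dyadicMean A f (x + digitUnit A) = dyadicMean A f x := by
  simpa only [dyadicMean, one_mul] using groupConv_translate (c := 1)
    (fun y ↦ by rw [dirichletSum_add_digitUnit le_rfl, one_mul]) f x

lemma dyadicDiff_add_digitUnit_of_lt (f : DyadicGroup N → ℝ) {A B : ℕ} (h : A < B)
    (x : DyadicGroup N) : dyadicDiff A f (x + digitUnit B) = dyadicDiff A f x := by
  simpa only [dyadicDiff, one_mul] using groupConv_translate (c := 1) (fun y ↦ by
    rw [dirichletSum_add_digitUnit (Nat.pow_le_pow_right two_pos h.le),
      digitSign_add_digitUnit_of_ne _ h.ne, one_mul]) f x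

lemma dyadicDiff_add_digitUnit (f : DyadicGroup N → ℝ) {A : ℕ} (hA : A < N) (x : DyadicGroup N) :
    dyadicDiff A f (x + digitUnit A) = -dyadicDiff A f x := by
  simpa only [dyadicDiff, neg_mul, one_mul] using groupConv_translate (c := -1) (fun y ↦ by
    rw [dirichletSum_add_digitUnit le_rfl, digitSign_add_digitUnit _ hA, neg_mul, neg_one_mul]) f x

lemma martTransform_add_digitUnit (ε : ℕ → ℝ) (n : ℕ) (f : DyadicGroup N → ℝ)
    (x : DyadicGroup N) : martTransform ε n f (x + digitUnit n) = martTransform ε n f x :=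
  sum_congr rfl fun A hA ↦ by rw [dyadicDiff_add_digitUnit_of_lt f (mem_range.1 hA)]

lemma dirichletSum_digitSign_two_pow_self (y : DyadicGroup N) :
    dirichletSum (digitSign y) (2 ^ N) = if y = 0 then 2 ^ N else 0 := by
  rw [dirichletSum_two_pow]
  split_ifs with hy
  · simp [hy, digitSign, one_add_one_eq_two]
  · obtain ⟨i, hi⟩ := Function.ne_iff.1 hy
    refine prod_eq_zero (mem_range.2 i.2) ?_
    simp [digitSign, show y i ≠ 0 from hi]

lemma dyadicMean_self (f : DyadicGroup N → ℝ) (x : DyadicGroup N) : dyadicMean N f x = f x := by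
  rw [dyadicMean, groupConv, Fintype.expect_eq_sum_div_card]
  simp [dirichletSum_digitSign_two_pow_self, sub_eq_zero]

lemma expect_martTransform_succ_le {U : ℝ → ℝ → ℝ} (hU : IsZigzagConcave U) {ε : ℕ → ℝ}
    (hε : ∀ A, |ε A| ≤ 1) (f : DyadicGroup N → ℝ) {A : ℕ} (hA : A < N) :
    𝔼 x, U (dyadicMean (A + 1) f x) (martTransform ε (A + 1) f x) ≤
      𝔼 x, U (dyadicMean A f x) (martTransform ε A f x) := by
  have hreflect : 𝔼 x, U (dyadicMean (A + 1) f x) (martTransform ε (A + 1) f x) =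
      𝔼 x, U (dyadicMean A f x - dyadicDiff A f x)
        (martTransform ε A f x - ε A * dyadicDiff A f x) := by
    refine (Fintype.expect_equiv (Equiv.addRight (digitUnit A)) _ _ fun x ↦ ?_).symm
    simp only [Equiv.coe_addRight, dyadicMean_succ, martTransform_succ, dyadicMean_add_digitUnit,
      martTransform_add_digitUnit, dyadicDiff_add_digitUnit f hA, mul_neg, sub_eq_add_neg]
  have hconcave := expect_le_expect fun x (_ : x ∈ univ) ↦
    hU (dyadicMean A f x) (martTransform ε A f x) (dyadicDiff A f x) (ε A) (hε A)
  rw [expect_add_distrib, ← hreflect, ← mul_expect] at hconcave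
  simp only [← dyadicMean_succ, ← martTransform_succ] at hconcave
  linarith

lemma expect_martTransform_le {U : ℝ → ℝ → ℝ} (hU : IsZigzagConcave U) (hU0 : ∀ x, U x 0 ≤ 0)
    {ε : ℕ → ℝ} (hε : ∀ A, |ε A| ≤ 1) (f : DyadicGroup N → ℝ) :
    𝔼 x, U (f x) (martTransform ε N f x) ≤ 0 := by
  have hA : ∀ A ≤ N, 𝔼 x, U (dyadicMean A f x) (martTransform ε A f x) ≤ 0 := by
    intro A hA
    induction A with
    | zero => exact expect_le univ_nonempty fun x _ ↦ by simpa [martTransform] using hU0 _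
    | succ A ih => exact (expect_martTransform_succ_le hU hε f hA).trans (ih (by lia))
  simpa only [dyadicMean_self] using hA N le_rfl

/-- The proportion of points at which `|g|` exceeds `l`. -/
def tailProb {α : Type*} [Fintype α] (g : α → ℝ) (l : ℝ) : ℝ :=
  𝔼 x, if l < |g x| then (1 : ℝ) else 0

lemma expect_sq_martTransform_le {ε : ℕ → ℝ} (hε : ∀ A, |ε A| ≤ 1) (f : DyadicGroup N → ℝ) :
    𝔼 x, martTransform ε N f x ^ 2 ≤ 𝔼 x, f x ^ 2 := by
  have h := expect_martTransform_le isZigzagConcave_sq_sub_sq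
    (fun x ↦ by simpa using sq_nonneg x) hε f
  rwa [expect_sub_distrib, sub_nonpos] at h

lemma mul_tailProb_martTransform_le {ε : ℕ → ℝ} (hε : ∀ A, |ε A| ≤ 1) (f : DyadicGroup N → ℝ)
    {l : ℝ} (hl : 0 < l) :
    l * tailProb (martTransform ε N f) l ≤ 2 * 𝔼 x, |f x| := by
  have hconcave : IsZigzagConcave fun x y ↦ burkholderFun (x / l) (y / l) := by
    intro x y h δ hδ
    simpa only [add_div, sub_div, mul_div_assoc] using
      isZigzagConcave_burkholderFun (x / l) (y / l) (h / l) δ hδ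
  have hburkholder := expect_martTransform_le hconcave
    (fun x ↦ by simpa using burkholderFun_zero_right_nonpos (x / l)) hε f
  have hlower := expect_le_expect fun x (_ : x ∈ univ) ↦
    indicator_sub_le_burkholderFun (f x / l) (martTransform ε N f x / l)
  simp only [abs_div, abs_of_pos hl, one_lt_div hl, expect_sub_distrib, ← mul_expect,
    ← expect_div] at hlower
  have htail : tailProb (martTransform ε N f) l ≤ 2 * ((𝔼 x, |f x|) / l) := by
    rw [tailProb]
    linarith
  rwa [← mul_div_assoc, le_div_iff₀ hl, mul_comm] at htail

end MartingaleTransform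

/-! ### The Young functions `t log^k t` and extrapolation from weak type `(1,1)` -/

section LogYoung

open Finset

/-- A weighted sum of hinges at the dyadic levels, comparable to `t log^(k+1) t`; only the
finitely many `m` with `2 ^ m < t` contribute. -/
def weightedHinges (k : ℕ) (t : ℝ) : ℝ := ∑' m : ℕ, ((m : ℝ) + 1) ^ k * max (t - 2 ^ m) 0

/-- A convex substitute for `t log^k t` which is a positive combination of `t` and hinges. -/
def logYoung : ℕ → ℝ → ℝ
  | 0, t => t
  | k + 1, t => t + weightedHinges k t

lemma weightedHinges_eq_sum (k : ℕ) {M : ℕ} {t : ℝ} (ht : t ≤ 2 ^ M) :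
    weightedHinges k t = ∑ m ∈ range M, ((m : ℝ) + 1) ^ k * max (t - 2 ^ m) 0 := by
  refine tsum_eq_sum fun m hm ↦ ?_
  have hpow : (2 : ℝ) ^ M ≤ 2 ^ m := pow_le_pow_right₀ one_le_two (by simpa using hm)
  rw [max_eq_right (by linarith), mul_zero]

lemma summable_weightedHinges (k : ℕ) (t : ℝ) :
    Summable fun m : ℕ ↦ ((m : ℝ) + 1) ^ k * max (t - 2 ^ m) 0 := by
  obtain ⟨M, hM⟩ := pow_unbounded_of_one_lt t one_lt_two
  refine summable_of_ne_finset_zero (s := range M) fun m hm ↦ ?_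
  have hpow : (2 : ℝ) ^ M ≤ 2 ^ m := pow_le_pow_right₀ one_le_two (by simpa using hm)
  rw [max_eq_right (by linarith), mul_zero]

lemma sum_le_weightedHinges (k M : ℕ) (t : ℝ) :
    ∑ m ∈ range M, ((m : ℝ) + 1) ^ k * max (t - 2 ^ m) 0 ≤ weightedHinges k t :=
  (summable_weightedHinges k t).sum_le_tsum _ fun _ _ ↦ by positivity

lemma weightedHinges_nonneg (k : ℕ) (t : ℝ) : 0 ≤ weightedHinges k t :=
  tsum_nonneg fun _ ↦ by positivity

lemma weightedHinges_mono (k : ℕ) : Monotone (weightedHinges k) := fun s t h ↦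
  (summable_weightedHinges k s).tsum_le_tsum (fun m ↦ by gcongr) (summable_weightedHinges k t)

lemma weightedHinges_le_succ (k : ℕ) (t : ℝ) : weightedHinges k t ≤ weightedHinges (k + 1) t := by
  refine (summable_weightedHinges k t).tsum_le_tsum (fun m ↦ ?_) (summable_weightedHinges _ t)
  gcongr
  · exact le_add_of_nonneg_left m.cast_nonneg
  · exact k.le_succ

lemma hinge_midpoint_le (a b c : ℝ) :
    max ((a + b) / 2 - c) 0 ≤ (max (a - c) 0 + max (b - c) 0) / 2 :=
  max_le (by linarith [le_max_left (a - c) 0, le_max_left (b - c) 0])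
    (by linarith [le_max_right (a - c) 0, le_max_right (b - c) 0])

lemma weightedHinges_midpoint_le (k : ℕ) (a b : ℝ) :
    weightedHinges k ((a + b) / 2) ≤ (weightedHinges k a + weightedHinges k b) / 2 := by
  have hsum := (summable_weightedHinges k a).add (summable_weightedHinges k b)
  rw [weightedHinges, weightedHinges, weightedHinges,
    ← (summable_weightedHinges k a).tsum_add (summable_weightedHinges k b), ← tsum_div_const]
  refine (summable_weightedHinges k _).tsum_le_tsum (fun m ↦ ?_) (hsum.div_const 2)
  rw [← mul_add, mul_div_assoc]
  gcongr
  exact hinge_midpoint_le _ _ _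

lemma logYoung_mono (k : ℕ) : Monotone (logYoung k) := fun s t h ↦ by
  cases k with
  | zero => exact h
  | succ k => exact add_le_add h (weightedHinges_mono k h)

lemma logYoung_midpoint_le (k : ℕ) (a b : ℝ) :
    logYoung k ((a + b) / 2) ≤ (logYoung k a + logYoung k b) / 2 := by
  cases k with
  | zero => simp only [logYoung, le_refl]
  | succ k =>
    simp only [logYoung]
    linarith [weightedHinges_midpoint_le k a b]

lemma le_logYoung (k : ℕ) (t : ℝ) : t ≤ logYoung k t := by
  cases k with
  | zero => exact le_rfl
  | succ k => exact le_add_of_nonneg_right (weightedHinges_nonneg k t)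

lemma logYoung_le_succ (k : ℕ) (t : ℝ) : logYoung k t ≤ logYoung (k + 1) t := by
  cases k with
  | zero => exact le_logYoung 1 t
  | succ k => exact add_le_add_right (weightedHinges_le_succ k t) t

lemma min_sub_two_pow_le_sum_levels (t : ℝ) {m K : ℕ} (hK : m ≤ K) :
    min t (2 ^ K) - 2 ^ m ≤ ∑ j ∈ Ico m K, if (2 : ℝ) ^ j < t then (2 : ℝ) ^ j else 0 := by
  induction K, hK using Nat.le_induction with
  | base => simp
  | succ K hK ih =>
    rw [sum_Ico_succ_top hK]
    have hleft := min_le_left t (2 ^ (K + 1))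
    have hright := min_le_right t (2 ^ (K + 1))
    rw [pow_succ] at hleft hright ⊢
    split_ifs with h
    · rw [min_eq_right h.le] at ih
      linarith
    · rw [min_eq_left (not_lt.1 h)] at ih
      linarith

lemma hinge_le_sum_levels (m : ℕ) {M : ℕ} {t : ℝ} (ht : t ≤ 2 ^ M) :
    max (t - 2 ^ m) 0 ≤ ∑ j ∈ Ico m M, if (2 : ℝ) ^ j < t then (2 : ℝ) ^ j else 0 := by
  refine max_le ?_ (sum_nonneg fun j _ ↦ by positivity)
  rcases le_total m M with h | h
  · simpa only [min_eq_left ht] using min_sub_two_pow_le_sum_levels t h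
  · have hpow : (2 : ℝ) ^ M ≤ 2 ^ m := pow_le_pow_right₀ one_le_two h
    rw [Ico_eq_empty_of_le h, sum_empty]
    linarith

lemma weightedHinges_le_sum_levels (k : ℕ) {M : ℕ} {t : ℝ} (ht : t ≤ 2 ^ M) :
    weightedHinges k t ≤
      ∑ j ∈ range M, ((j : ℝ) + 1) ^ (k + 1) * if (2 : ℝ) ^ j < t then (2 : ℝ) ^ j else 0 := by
  set level : ℕ → ℝ := fun j ↦ if (2 : ℝ) ^ j < t then (2 : ℝ) ^ j else 0
  have hlevel : ∀ j, 0 ≤ level j := fun j ↦ by positivity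
  calc weightedHinges k t
      ≤ ∑ m ∈ range M, ((m : ℝ) + 1) ^ k * ∑ j ∈ Ico m M, level j := by
        rw [weightedHinges_eq_sum k ht]
        exact sum_le_sum fun m _ ↦
          mul_le_mul_of_nonneg_left (hinge_le_sum_levels m ht) (by positivity)
    _ = ∑ j ∈ range M, ∑ m ∈ range (j + 1), ((m : ℝ) + 1) ^ k * level j := by
        simp only [mul_sum]
        exact sum_comm' fun m j ↦ by simp only [mem_range, mem_Ico]; lia
    _ ≤ ∑ j ∈ range M, ∑ m ∈ range (j + 1), ((j : ℝ) + 1) ^ k * level j := by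
        refine sum_le_sum fun j _ ↦ sum_le_sum fun m hm ↦ ?_
        have hmj : (m : ℝ) ≤ j := by exact_mod_cast Nat.lt_succ_iff.1 (mem_range.1 hm)
        have := hlevel j
        gcongr
    _ = ∑ j ∈ range M, ((j : ℝ) + 1) ^ (k + 1) * level j := by
        refine sum_congr rfl fun j _ ↦ ?_
        rw [sum_const, card_range, nsmul_eq_mul]
        push_cast
        ring

lemma logYoung_le_sum_levels (k : ℕ) {M : ℕ} {t : ℝ} (ht : t ≤ 2 ^ M) :
    logYoung k t ≤
      1 + 2 * ∑ j ∈ range M, ((j : ℝ) + 1) ^ k * if (2 : ℝ) ^ j < t then (2 : ℝ) ^ j else 0 := by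
  have hnonneg : 0 ≤ ∑ j ∈ range M,
      ((j : ℝ) + 1) ^ k * if (2 : ℝ) ^ j < t then (2 : ℝ) ^ j else 0 :=
    sum_nonneg fun j _ ↦ by positivity
  have hlinear : t - 1 ≤ ∑ j ∈ range M,
      ((j : ℝ) + 1) ^ k * if (2 : ℝ) ^ j < t then (2 : ℝ) ^ j else 0 := calc
    t - 1 ≤ max (t - 2 ^ 0) 0 := by simp
    _ ≤ ∑ j ∈ range M, if (2 : ℝ) ^ j < t then (2 : ℝ) ^ j else 0 := by
      simpa only [range_eq_Ico] using hinge_le_sum_levels 0 ht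
    _ ≤ _ := sum_le_sum fun j _ ↦ le_mul_of_one_le_left (by positivity)
      (one_le_pow₀ (le_add_of_nonneg_left j.cast_nonneg))
  cases k with
  | zero => simp only [logYoung]; linarith
  | succ k =>
    simp only [logYoung]
    linarith [weightedHinges_le_sum_levels k ht]

/-- The constant `∑ (l + 1)^k 2^(-l)`. -/
def polyGeomSum (k : ℕ) : ℝ := ∑' l : ℕ, ((l : ℝ) + 1) ^ k * (1 / 2) ^ l

lemma summable_polyGeom (k : ℕ) : Summable fun l : ℕ ↦ ((l : ℝ) + 1) ^ k * (1 / 2 : ℝ) ^ l := by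
  have h := summable_pow_mul_geometric_of_norm_lt_one (R := ℝ) k (r := 1 / 2) (by norm_num)
  refine (((summable_nat_add_iff 1).2 h).mul_left 2).congr fun l ↦ ?_
  push_cast
  ring

lemma sum_le_polyGeomSum (k n : ℕ) :
    ∑ l ∈ range n, ((l : ℝ) + 1) ^ k * (1 / 2) ^ l ≤ polyGeomSum k :=
  (summable_polyGeom k).sum_le_tsum _ fun _ _ ↦ by positivity

lemma polyGeomSum_nonneg (k : ℕ) : 0 ≤ polyGeomSum k := tsum_nonneg fun _ ↦ by positivity

lemma sum_Ico_le_polyGeomSum_mul (k i M : ℕ) :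
    ∑ j ∈ Ico i M, ((j : ℝ) + 1) ^ k * (1 / 2) ^ j ≤
      polyGeomSum k * (((i : ℝ) + 1) ^ k * (1 / 2) ^ i) := by
  have hterm (l : ℕ) : (((i + l : ℕ) : ℝ) + 1) ^ k * (1 / 2) ^ (i + l) ≤
      ((l : ℝ) + 1) ^ k * (1 / 2) ^ l * (((i : ℝ) + 1) ^ k * (1 / 2) ^ i) := calc
    _ ≤ (((l : ℝ) + 1) * ((i : ℝ) + 1)) ^ k * (1 / 2) ^ (i + l) := by
      gcongr
      push_cast
      nlinarith [mul_nonneg (Nat.cast_nonneg (α := ℝ) l) (Nat.cast_nonneg (α := ℝ) i)]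
    _ = _ := by rw [mul_pow]; ring
  rw [sum_Ico_eq_sum_range]
  refine (sum_le_sum fun l _ ↦ hterm l).trans ?_
  rw [← sum_mul]
  exact mul_le_mul_of_nonneg_right (sum_le_polyGeomSum _ _) (by positivity)

lemma sq_min_two_pow_le {t : ℝ} (ht : 0 ≤ t) (j : ℕ) :
    min t (2 ^ j) ^ 2 ≤ 1 + ∑ i ∈ range j, 3 * 2 ^ i * max (t - 2 ^ i) 0 := by
  induction j with
  | zero =>
    rw [pow_zero, range_zero, sum_empty, add_zero]
    exact pow_le_one₀ (le_min ht zero_le_one) (min_le_right t 1)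
  | succ j ih =>
    rw [sum_range_succ]
    have hpow : (2 : ℝ) ^ j ≤ 2 ^ (j + 1) := pow_le_pow_right₀ one_le_two j.le_succ
    rcases le_total t (2 ^ j) with h | h
    · rw [min_eq_left h] at ih
      rw [min_eq_left (h.trans hpow)]
      linarith [show 0 ≤ 3 * 2 ^ j * max (t - 2 ^ j) 0 by positivity]
    · rw [min_eq_right h] at ih
      rw [max_eq_left (sub_nonneg.2 h)]
      have hlower := le_min h hpow
      have hle_t := min_le_left t (2 ^ (j + 1))
      have hle_pow := min_le_right t (2 ^ (j + 1))
      rw [pow_succ (2 : ℝ) j] at hle_t hle_pow hlower ⊢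
      nlinarith [pow_pos (two_pos (α := ℝ)) j]

lemma sum_mul_sq_min_two_pow_le (k M : ℕ) {t : ℝ} (ht : 0 ≤ t) :
    ∑ j ∈ range M, ((j : ℝ) + 1) ^ k * (1 / 2) ^ j * min t (2 ^ j) ^ 2 ≤
      3 * polyGeomSum k * (1 + weightedHinges k t) := by
  have htail (i : ℕ) : 3 * 2 ^ i * max (t - 2 ^ i) 0 *
      ∑ j ∈ Ico (i + 1) M, ((j : ℝ) + 1) ^ k * (1 / 2) ^ j ≤
        3 * polyGeomSum k * (((i : ℝ) + 1) ^ k * max (t - 2 ^ i) 0) := calc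
    _ ≤ 3 * 2 ^ i * max (t - 2 ^ i) 0 * (polyGeomSum k * (((i : ℝ) + 1) ^ k * (1 / 2) ^ i)) := by
      gcongr
      refine le_trans ?_ (sum_Ico_le_polyGeomSum_mul k i M)
      exact sum_le_sum_of_subset_of_nonneg (Ico_subset_Ico_left i.le_succ) fun _ _ _ ↦ by positivity
    _ = 3 * polyGeomSum k * (((i : ℝ) + 1) ^ k * max (t - 2 ^ i) 0) * (2 ^ i * (1 / 2) ^ i) := by
      ring
    _ = _ := by rw [← mul_pow]; norm_num
  calc _ ≤ ∑ j ∈ range M, ((j : ℝ) + 1) ^ k * (1 / 2) ^ j *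
        (1 + ∑ i ∈ range j, 3 * 2 ^ i * max (t - 2 ^ i) 0) := by
        gcongr with j
        exact sq_min_two_pow_le ht j
    _ = ∑ j ∈ range M, ((j : ℝ) + 1) ^ k * (1 / 2) ^ j + ∑ i ∈ range M,
        3 * 2 ^ i * max (t - 2 ^ i) 0 * ∑ j ∈ Ico (i + 1) M, ((j : ℝ) + 1) ^ k * (1 / 2) ^ j := by
        simp only [mul_add, mul_one, sum_add_distrib, mul_sum]
        rw [sum_comm' (t' := range M) (s' := fun i ↦ Ico (i + 1) M)
          fun j i ↦ by simp only [mem_range, mem_Ico]; lia]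
        simp only [mul_comm]
    _ ≤ polyGeomSum k + 3 * polyGeomSum k * weightedHinges k t := by
        refine add_le_add (sum_le_polyGeomSum k M) ((sum_le_sum fun i _ ↦ htail i).trans ?_)
        rw [← mul_sum]
        exact mul_le_mul_of_nonneg_left (sum_le_weightedHinges k M t)
          (mul_nonneg zero_le_three (polyGeomSum_nonneg k))
    _ ≤ _ := by linarith [polyGeomSum_nonneg k]

end LogYoung

section Extrapolation

open Finset
open scoped BigOperators

/-- The truncation of a real number to `[-c, c]`. -/
def truncate (c t : ℝ) : ℝ := max (-c) (min t c)

lemma abs_truncate {c : ℝ} (hc : 0 ≤ c) (t : ℝ) : |truncate c t| = min |t| c := by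
  rw [truncate]
  grind

lemma abs_sub_truncate {c : ℝ} (hc : 0 ≤ c) (t : ℝ) : |t - truncate c t| = max (|t| - c) 0 := by
  rw [truncate]
  grind

lemma exists_forall_le_two_pow {α : Type*} [Finite α] (g : α → ℝ) : ∃ M : ℕ, ∀ x, g x ≤ 2 ^ M := by
  obtain ⟨b, hb⟩ := (Set.finite_range g).bddAbove
  obtain ⟨M, hM⟩ := pow_unbounded_of_one_lt b one_lt_two
  exact ⟨M, fun x ↦ (hb ⟨x, rfl⟩).trans hM.le⟩

variable {α : Type*} [Fintype α] {T : (α → ℝ) → α → ℝ} {S W : ℝ}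

lemma mul_indicator_abs_add_le {c : ℝ} (hc : 0 < c) {y u v : ℝ} (h : |y| ≤ |u| + |v|) :
    c * (if c < |y| then 1 else 0) ≤ 4 * (u ^ 2 / c) + c * (if c / 2 < |v| then 1 else 0) := by
  have hu : 0 ≤ u ^ 2 / c := by positivity
  by_cases hy : c < |y|
  · rw [if_pos hy]
    by_cases hv : c / 2 < |v|
    · rw [if_pos hv]
      linarith
    · have hcu : (c / 2) ^ 2 ≤ u ^ 2 := by
        rw [← sq_abs u]
        exact pow_le_pow_left₀ (by positivity) (by linarith) 2
      have hdiv : c / 4 ≤ u ^ 2 / c := by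
        rw [le_div_iff₀ hc]
        linarith
      rw [if_neg hv]
      linarith
  · rw [if_neg hy, mul_zero]
    positivity

lemma mul_tailProb_le_of_strong_of_weak
    (hsub : ∀ f g x, |T (fun t ↦ f t + g t) x| ≤ |T f x| + |T g x|)
    (hstrong : ∀ f, 𝔼 x, T f x ^ 2 ≤ S * 𝔼 x, f x ^ 2)
    (hweak : ∀ f l, 0 < l → l * tailProb (T f) l ≤ W * 𝔼 x, |f x|)
    (f : α → ℝ) {c : ℝ} (hc : 0 < c) :
    c * tailProb (T f) c ≤
      4 * S * ((𝔼 x, min |f x| c ^ 2) / c) + 2 * W * 𝔼 x, max (|f x| - c) 0 := by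
  set small : α → ℝ := fun x ↦ truncate c (f x)
  set big : α → ℝ := fun x ↦ f x - truncate c (f x)
  have hsplit (x : α) : |T f x| ≤ |T small x| + |T big x| := by
    simpa only [small, big, add_sub_cancel] using hsub small big x
  have hpointwise := expect_le_expect fun x (_ : x ∈ univ) ↦
    mul_indicator_abs_add_le hc (hsplit x)
  rw [expect_add_distrib, ← mul_expect, ← mul_expect, ← mul_expect, ← expect_div] at hpointwise
  have hsmall : (𝔼 x, T small x ^ 2) / c ≤ S * ((𝔼 x, min |f x| c ^ 2) / c) := by
    rw [← mul_div_assoc]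
    gcongr
    simpa only [small, ← abs_truncate hc.le, sq_abs] using hstrong small
  have hbig : c / 2 * tailProb (T big) (c / 2) ≤ W * 𝔼 x, max (|f x| - c) 0 := by
    simpa only [big, abs_sub_truncate hc.le] using hweak big (c / 2) (half_pos hc)
  rw [tailProb] at hbig ⊢
  linarith

lemma sum_mul_tailProb_le_of_strong_of_weak [Nonempty α] (hS : 0 ≤ S) (hW : 0 ≤ W)
    (hsub : ∀ f g x, |T (fun t ↦ f t + g t) x| ≤ |T f x| + |T g x|)
    (hstrong : ∀ f, 𝔼 x, T f x ^ 2 ≤ S * 𝔼 x, f x ^ 2)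
    (hweak : ∀ f l, 0 < l → l * tailProb (T f) l ≤ W * 𝔼 x, |f x|)
    (f : α → ℝ) (k M : ℕ) :
    ∑ j ∈ range M, ((j : ℝ) + 1) ^ k * (2 ^ j * tailProb (T f) (2 ^ j)) ≤
      4 * S * (3 * polyGeomSum k * (1 + 𝔼 x, weightedHinges k |f x|)) +
        2 * W * 𝔼 x, weightedHinges k |f x| := by
  have hlevel (j : ℕ) : ((j : ℝ) + 1) ^ k * (2 ^ j * tailProb (T f) (2 ^ j)) ≤
      4 * S * (𝔼 x, ((j : ℝ) + 1) ^ k * (1 / 2) ^ j * min |f x| (2 ^ j) ^ 2) +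
        2 * W * 𝔼 x, ((j : ℝ) + 1) ^ k * max (|f x| - 2 ^ j) 0 := by
    have h := mul_le_mul_of_nonneg_left (mul_tailProb_le_of_strong_of_weak hsub hstrong hweak f
      (pow_pos two_pos j)) (pow_nonneg (by positivity : (0 : ℝ) ≤ (j : ℝ) + 1) k)
    rw [← mul_expect, ← mul_expect, one_div, inv_pow]
    exact h.trans_eq (by ring)
  refine (sum_le_sum fun j _ ↦ hlevel j).trans ?_
  rw [sum_add_distrib, ← mul_sum, ← mul_sum, ← expect_sum_comm, ← expect_sum_comm]
  gcongr
  · calc _ ≤ 𝔼 x, 3 * polyGeomSum k * (1 + weightedHinges k |f x|) :=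
          expect_le_expect fun x _ ↦ sum_mul_sq_min_two_pow_le k M (abs_nonneg _)
      _ = _ := by rw [← mul_expect, expect_add_distrib, Fintype.expect_const]
  · exact sum_le_weightedHinges k M _

/-- A Yano-type extrapolation theorem: an operator of strong type `(2,2)` and weak type `(1,1)`
maps `L log^(k+1) L` into `L log^k L`. -/
theorem expect_logYoung_le_of_strong_of_weak [Nonempty α] (hS : 0 ≤ S) (hW : 0 ≤ W)
    (hsub : ∀ f g x, |T (fun t ↦ f t + g t) x| ≤ |T f x| + |T g x|)
    (hstrong : ∀ f, 𝔼 x, T f x ^ 2 ≤ S * 𝔼 x, f x ^ 2)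
    (hweak : ∀ f l, 0 < l → l * tailProb (T f) l ≤ W * 𝔼 x, |f x|)
    (f : α → ℝ) (k : ℕ) :
    𝔼 x, logYoung k |T f x| ≤
      (1 + 24 * S * polyGeomSum k + 4 * W) * (1 + 𝔼 x, logYoung (k + 1) |f x|) := by
  obtain ⟨M, hM⟩ := exists_forall_le_two_pow fun x ↦ |T f x|
  have hsum := sum_mul_tailProb_le_of_strong_of_weak hS hW hsub hstrong hweak f k M
  have hhinges : 𝔼 x, weightedHinges k |f x| ≤ 𝔼 x, logYoung (k + 1) |f x| :=
    expect_le_expect fun x _ ↦ le_add_of_nonneg_left (abs_nonneg _)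
  have hhinges_nonneg : 0 ≤ 𝔼 x, weightedHinges k |f x| :=
    expect_nonneg fun x _ ↦ weightedHinges_nonneg k _
  calc 𝔼 x, logYoung k |T f x|
      ≤ 𝔼 x, (1 + 2 * ∑ j ∈ range M,
          ((j : ℝ) + 1) ^ k * if (2 : ℝ) ^ j < |T f x| then (2 : ℝ) ^ j else 0) :=
        expect_le_expect fun x _ ↦ logYoung_le_sum_levels k (hM x)
    _ = 1 + 2 * ∑ j ∈ range M, ((j : ℝ) + 1) ^ k * (2 ^ j * tailProb (T f) (2 ^ j)) := by
        simp only [tailProb, mul_expect, mul_ite, mul_one, mul_zero, expect_add_distrib,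
          Fintype.expect_const, expect_sum_comm, mul_sum]
    _ ≤ (1 + 24 * S * polyGeomSum k + 4 * W) * (1 + 𝔼 x, weightedHinges k |f x|) := by
        linarith
    _ ≤ _ := by
        have := polyGeomSum_nonneg k
        gcongr

end Extrapolation

/-! ### Hinge contractions and operators losing one logarithm -/

section OperatorClasses

open Finset
open scoped BigOperators

variable {α : Type*} [Fintype α] {T U E : (α → ℝ) → α → ℝ} {C : ℕ → ℝ} {W : ℝ}

/-- The operators that do not increase the mean of any hinge `max (|f| - l) 0`, hence no Orlicz
mean of `f` at all. -/
def IsHingeContraction (T : (α → ℝ) → α → ℝ) : Prop :=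
  ∀ (f : α → ℝ) (l : ℝ), 0 ≤ l → 𝔼 x, max (|T f x| - l) 0 ≤ 𝔼 x, max (|f x| - l) 0

lemma IsHingeContraction.expect_abs_le (hT : IsHingeContraction T) (f : α → ℝ) :
    𝔼 x, |T f x| ≤ 𝔼 x, |f x| := by
  simpa using hT f 0 le_rfl

lemma IsHingeContraction.expect_weightedHinges_le (hT : IsHingeContraction T) (f : α → ℝ)
    (k : ℕ) : 𝔼 x, weightedHinges k |T f x| ≤ 𝔼 x, weightedHinges k |f x| := by
  obtain ⟨M, hM⟩ := exists_forall_le_two_pow fun x ↦ |T f x|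
  calc 𝔼 x, weightedHinges k |T f x|
      = ∑ m ∈ range M, ((m : ℝ) + 1) ^ k * 𝔼 x, max (|T f x| - 2 ^ m) 0 := by
        simp only [weightedHinges_eq_sum k (hM _), expect_sum_comm, mul_expect]
    _ ≤ ∑ m ∈ range M, ((m : ℝ) + 1) ^ k * 𝔼 x, max (|f x| - 2 ^ m) 0 :=
        sum_le_sum fun m _ ↦
          mul_le_mul_of_nonneg_left (hT f (2 ^ m) (by positivity)) (by positivity)
    _ = 𝔼 x, ∑ m ∈ range M, ((m : ℝ) + 1) ^ k * max (|f x| - 2 ^ m) 0 := by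
        simp only [expect_sum_comm, mul_expect]
    _ ≤ _ := expect_le_expect fun x _ ↦ sum_le_weightedHinges k M _

lemma IsHingeContraction.expect_logYoung_le (hT : IsHingeContraction T) (f : α → ℝ) (k : ℕ) :
    𝔼 x, logYoung k |T f x| ≤ 𝔼 x, logYoung k |f x| := by
  cases k with
  | zero => exact hT.expect_abs_le f
  | succ k =>
    simp only [logYoung, expect_add_distrib]
    exact add_le_add (hT.expect_abs_le f) (hT.expect_weightedHinges_le f k)

lemma expect_logYoung_abs_nonneg (k : ℕ) (f : α → ℝ) : 0 ≤ 𝔼 x, logYoung k |f x| :=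
  expect_nonneg fun x _ ↦ (abs_nonneg (f x)).trans (le_logYoung k _)

/-- Operators of weak type `(1,1)` with constant `W` that map `L log^(k+1) L` into `L log^k L`
with constant `C k` for every `k`. -/
structure IsLogBounded (C : ℕ → ℝ) (W : ℝ) (T : (α → ℝ) → α → ℝ) : Prop where
  expect_logYoung_le : ∀ (k : ℕ) (f : α → ℝ),
    𝔼 x, logYoung k |T f x| ≤ C k * (1 + 𝔼 x, logYoung (k + 1) |f x|)
  mul_tailProb_le : ∀ (f : α → ℝ) (l : ℝ), 0 < l → l * tailProb (T f) l ≤ W * 𝔼 x, |f x|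

lemma IsLogBounded.half_add_hingeContraction (hC : ∀ k, 1 ≤ C k) (hU : IsLogBounded C W U)
    (hE : IsHingeContraction E) (hT : ∀ f x, |T f x| ≤ (|U f x| + |E f x|) / 2) :
    IsLogBounded C (W + 1) T where
  expect_logYoung_le k f := by
    have hmid := expect_le_expect fun x (_ : x ∈ univ) ↦
      (logYoung_mono k (hT f x)).trans (logYoung_midpoint_le k _ _)
    rw [← expect_div, expect_add_distrib] at hmid
    have hUf := hU.expect_logYoung_le k f
    have hEf : 𝔼 x, logYoung k |E f x| ≤ 𝔼 x, logYoung (k + 1) |f x| :=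
      (hE.expect_logYoung_le f k).trans (expect_le_expect fun x _ ↦ logYoung_le_succ k _)
    nlinarith [expect_logYoung_abs_nonneg (k + 1) f, hC k]
  mul_tailProb_le f l hl := by
    have hpointwise (x : α) : l * (if l < |T f x| then 1 else 0) ≤
        l * (if l < |U f x| then 1 else 0) + |E f x| := by
      have hTf := hT f x
      have hEf := abs_nonneg (E f x)
      split_ifs <;> linarith
    have hmean := expect_le_expect fun x (_ : x ∈ univ) ↦ hpointwise x
    rw [expect_add_distrib, ← mul_expect, ← mul_expect] at hmean
    have hUf := hU.mul_tailProb_le f l hl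
    rw [tailProb] at hUf ⊢
    linarith [hE.expect_abs_le f]

lemma isHingeContraction_groupConv {G : Type*} [Fintype G] [AddCommGroup G] {K : G → ℝ}
    (hK : 𝔼 x, |K x| ≤ 1) : IsHingeContraction (groupConv K) := by
  intro f l hl
  have hreflect (x : G) : 𝔼 t, |K (x - t)| ≤ 1 :=
    (Fintype.expect_equiv (Equiv.subLeft x) _ _ fun t ↦ rfl).trans_le hK
  have htranslate (t : G) : 𝔼 x, |K (x - t)| ≤ 1 :=
    (Fintype.expect_equiv (Equiv.subRight t) _ _ fun x ↦ rfl).trans_le hK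
  have hpointwise (x : G) :
      max (|groupConv K f x| - l) 0 ≤ 𝔼 t, max (|f t| - l) 0 * |K (x - t)| := by
    refine max_le ?_ (expect_nonneg fun t _ ↦ by positivity)
    have habs : |groupConv K f x| ≤ 𝔼 t, (max (|f t| - l) 0 * |K (x - t)| + l * |K (x - t)|) := by
      refine (abs_expect_le _ _).trans (expect_le_expect fun t _ ↦ ?_)
      rw [abs_mul, ← add_mul]
      gcongr
      linarith [le_max_left (|f t| - l) 0]
    rw [expect_add_distrib, ← mul_expect] at habs
    linarith [mul_le_of_le_one_right hl (hreflect x)]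
  refine (expect_le_expect fun x _ ↦ hpointwise x).trans ?_
  rw [expect_comm]
  refine expect_le_expect fun t _ ↦ ?_
  rw [← mul_expect]
  exact mul_le_of_le_one_right (le_max_right _ _) (htranslate t)

end OperatorClasses

section LogMeanKernels

open Finset
open scoped BigOperators

variable {N n : ℕ}

/-- The constant with which martingale transforms map `L log^(k+1) L` into `L log^k L`, namely the
extrapolation constant for strong type constant `1` and weak type constant `2`. -/
def martTransformConst (k : ℕ) : ℝ := 1 + 24 * 1 * polyGeomSum k + 4 * 2

lemma one_le_martTransformConst (k : ℕ) : 1 ≤ martTransformConst k := by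
  rw [martTransformConst]
  linarith [polyGeomSum_nonneg k]

lemma martTransform_add_right (ε : ℕ → ℝ) (n : ℕ) (f g : DyadicGroup N → ℝ) (x : DyadicGroup N) :
    martTransform ε n (fun t ↦ f t + g t) x = martTransform ε n f x + martTransform ε n g x := by
  simp only [martTransform, dyadicDiff, groupConv_add_right, mul_add, sum_add_distrib]

lemma isLogBounded_martTransform {ε : ℕ → ℝ} (hε : ∀ A, |ε A| ≤ 1) :
    IsLogBounded martTransformConst 2 (martTransform (N := N) ε N) where
  expect_logYoung_le k f := expect_logYoung_le_of_strong_of_weak zero_le_one zero_le_two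
    (fun f g x ↦ by rw [martTransform_add_right]; exact abs_add_le _ _)
    (fun f ↦ by rw [one_mul]; exact expect_sq_martTransform_le hε f)
    (fun f _ hl ↦ mul_tailProb_martTransform_le hε f hl) f k
  mul_tailProb_le f _ hl := mul_tailProb_martTransform_le hε f hl

lemma IsLogBounded.comp_mul_unimodular {α : Type*} [Fintype α] {C : ℕ → ℝ} {W : ℝ}
    {T : (α → ℝ) → α → ℝ} (hT : IsLogBounded C W T) {w : α → ℝ} (hw : ∀ x, |w x| = 1) :
    IsLogBounded C W fun f ↦ T fun t ↦ w t * f t where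
  expect_logYoung_le k f := by
    simpa only [abs_mul, hw, one_mul] using hT.expect_logYoung_le k fun t ↦ w t * f t
  mul_tailProb_le f l hl := by
    simpa only [abs_mul, hw, one_mul] using hT.mul_tailProb_le (fun t ↦ w t * f t) l hl

lemma groupConv_walshProd_mul (n : ℕ) (K f : DyadicGroup N → ℝ) (x : DyadicGroup N) :
    groupConv (fun y ↦ walshProd (digitSign y) n * K y) f x =
      walshProd (digitSign x) n * groupConv K (fun t ↦ walshProd (digitSign t) n * f t) x := by
  simp only [groupConv, walshProd_digitSign_sub, mul_expect]
  exact expect_congr rfl fun t _ ↦ by ring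

lemma groupConv_norlundPrincipal (n : ℕ) (f : DyadicGroup N → ℝ) (x : DyadicGroup N) :
    groupConv (fun y ↦ norlundPrincipal (digitSign y) N n) f x =
      martTransform (norlundCoef n) N f x := by
  simp only [norlundPrincipal, groupConv_sum, groupConv_const_mul, martTransform, dyadicDiff]

lemma groupConv_norlundSum (n : ℕ) (f : DyadicGroup N → ℝ) (x : DyadicGroup N) :
    groupConv (fun y ↦ norlundSum (digitSign y) n) f x =
      walshProd (digitSign x) n *
          martTransform (norlundCoef n) N (fun t ↦ walshProd (digitSign t) n * f t) x +
        groupConv (fun y ↦ norlundRemainder (digitSign y) N n) f x := by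
  rw [← groupConv_norlundPrincipal, ← groupConv_walshProd_mul, ← groupConv_add_left]
  simp only [norlundRemainder, add_sub_cancel]

lemma martTransform_const_mul (c : ℝ) (ε : ℕ → ℝ) (n : ℕ) (f : DyadicGroup N → ℝ)
    (x : DyadicGroup N) :
    martTransform (fun A ↦ c * ε A) n f x = c * martTransform ε n f x := by
  simp only [martTransform, mul_sum, mul_assoc]

lemma isHingeContraction_groupConv_const_mul {G : Type*} [Fintype G] [AddCommGroup G]
    {K : G → ℝ} {c : ℝ} (hc : 0 < c) (hK : 𝔼 x, |K x| ≤ c) :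
    IsHingeContraction (groupConv fun x ↦ c⁻¹ * K x) := by
  refine isHingeContraction_groupConv ?_
  simp only [abs_mul, abs_of_pos (inv_pos.2 hc), ← mul_expect]
  rwa [inv_mul_le_one₀ hc]

lemma isLogBounded_groupConv_norlundSum (hn : n < 2 ^ N) (h2 : 2 ≤ n) :
    IsLogBounded martTransformConst 3
      (groupConv fun y : DyadicGroup N ↦ (4 * logSum n)⁻¹ * norlundSum (digitSign y) n) := by
  have hL := one_le_logSum h2
  have hcoef (A : ℕ) : |(2 * logSum n)⁻¹ * norlundCoef n A| ≤ 1 := by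
    rw [abs_mul, abs_of_pos (by positivity), inv_mul_le_one₀ (by positivity)]
    linarith [abs_norlundCoef_le n A]
  have hwalsh (x : DyadicGroup N) : |walshProd (digitSign x) n| = 1 :=
    abs_walshProd (digitSign_mul_self x) n
  have hE : IsHingeContraction (groupConv fun y : DyadicGroup N ↦
      (2 * logSum n)⁻¹ * norlundRemainder (digitSign y) N n) :=
    isHingeContraction_groupConv_const_mul (by positivity) (expect_abs_norlundRemainder_le hn)
  have htransform := (isLogBounded_martTransform (N := N) hcoef).comp_mul_unimodular hwalsh
  rw [show (3 : ℝ) = 2 + 1 by norm_num]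
  refine htransform.half_add_hingeContraction one_le_martTransformConst hE fun f x ↦ ?_
  have hL4 : 0 < (4 * logSum n)⁻¹ := by positivity
  have hL2 : 0 < (2 * logSum n)⁻¹ := by positivity
  rw [groupConv_const_mul, groupConv_norlundSum, groupConv_const_mul, martTransform_const_mul,
    abs_mul, abs_mul, abs_mul, abs_of_pos hL4, abs_of_pos hL2]
  refine (mul_le_mul_of_nonneg_left (abs_add_le _ _) hL4.le).trans_eq ?_
  rw [abs_mul, hwalsh, mul_inv, mul_inv]
  ring

lemma isHingeContraction_groupConv_rieszSum (hn : n < 2 ^ N) (h2 : 2 ≤ n) :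
    IsHingeContraction
      (groupConv fun y : DyadicGroup N ↦ (4 * logSum n)⁻¹ * rieszSum (digitSign y) n) := by
  have hL := one_le_logSum h2
  exact isHingeContraction_groupConv_const_mul (by positivity)
    ((expect_abs_rieszSum_le hn).trans (by linarith))

end LogMeanKernels

/-! ### Product operators on finite powers -/

section Tensor

open Finset
open scoped BigOperators

variable {ι G : Type*} [Fintype ι] [DecidableEq ι] [Fintype G]

lemma expect_expect_update (j : ι) (F : (ι → G) → ℝ) :
    𝔼 x, 𝔼 t, F (Function.update x j t) = 𝔼 x, F x := by
  let swap : (ι → G) × G ≃ (ι → G) × G :=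
    { toFun := fun p ↦ (Function.update p.1 j p.2, p.1 j)
      invFun := fun p ↦ (Function.update p.1 j p.2, p.1 j)
      left_inv := fun p ↦ by simp
      right_inv := fun p ↦ by simp }
  rcases isEmpty_or_nonempty G with hG | hG
  · have : IsEmpty (ι → G) := ⟨fun x ↦ hG.false (x j)⟩
    simp
  calc 𝔼 x, 𝔼 t, F (Function.update x j t)
      = 𝔼 p : (ι → G) × G, F (swap p).1 := (expect_product' univ univ _).symm
    _ = 𝔼 p : (ι → G) × G, F p.1 := Fintype.expect_equiv swap _ _ fun _ ↦ rfl
    _ = 𝔼 x, 𝔼 _t : G, F x := expect_product' univ univ fun x _ ↦ F x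
    _ = 𝔼 x, F x := by simp only [Fintype.expect_const]

/-- The operator `T` acting on the `j`-th variable. -/
def coordOp (j : ι) (T : (G → ℝ) → G → ℝ) (f : (ι → G) → ℝ) (x : ι → G) : ℝ :=
  T (fun t ↦ f (Function.update x j t)) (x j)

lemma expect_comp_coordOp (j : ι) (T : (G → ℝ) → G → ℝ) (f : (ι → G) → ℝ) (H : ℝ → ℝ) :
    𝔼 x, H (coordOp j T f x) =
      𝔼 x, 𝔼 t, H (T (fun s ↦ f (Function.update x j s)) t) := by
  rw [← expect_expect_update j]
  simp only [coordOp, Function.update_idem, Function.update_self]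

lemma IsHingeContraction.coordOp {T : (G → ℝ) → G → ℝ} (hT : IsHingeContraction T) (j : ι) :
    IsHingeContraction (coordOp j T) := by
  intro f l hl
  rw [expect_comp_coordOp j T f fun s ↦ max (|s| - l) 0,
    ← expect_expect_update j fun x ↦ max (|f x| - l) 0]
  exact expect_le_expect fun x _ ↦ hT _ l hl

lemma IsLogBounded.coordOp [Nonempty G] {C : ℕ → ℝ} {W : ℝ} {T : (G → ℝ) → G → ℝ}
    (hT : IsLogBounded C W T) (j : ι) : IsLogBounded C W (coordOp j T) where
  expect_logYoung_le k f := by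
    rw [expect_comp_coordOp j T f fun s ↦ logYoung k |s|,
      ← expect_expect_update j fun x ↦ logYoung (k + 1) |f x|]
    refine (expect_le_expect fun x _ ↦ hT.expect_logYoung_le k _).trans_eq ?_
    rw [← mul_expect, expect_add_distrib, Fintype.expect_const]
  mul_tailProb_le f l hl := by
    rw [tailProb, expect_comp_coordOp j T f fun s ↦ if l < |s| then 1 else 0,
      ← expect_expect_update j fun x ↦ |f x|, mul_expect, mul_expect]
    exact expect_le_expect fun x _ ↦ hT.mul_tailProb_le _ l hl

variable [AddCommGroup G]

/-- Convolution with the kernels `K i` in the variables `i ∈ S`. -/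
def partialConv (S : Finset ι) (K : ι → G → ℝ) (f : (ι → G) → ℝ) (x : ι → G) : ℝ :=
  𝔼 t : ι → G, f (S.piecewise t x) * ∏ i ∈ S, K i (x i - t i)

lemma partialConv_empty (K : ι → G → ℝ) (f : (ι → G) → ℝ) : partialConv ∅ K f = f := by
  funext x
  simp only [partialConv, piecewise_empty, prod_empty, mul_one, Fintype.expect_const]

lemma partialConv_insert {S : Finset ι} {a : ι} (ha : a ∉ S) (K : ι → G → ℝ)
    (f : (ι → G) → ℝ) :
    partialConv (insert a S) K f = coordOp a (groupConv (K a)) (partialConv S K f) := by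
  funext x
  simp only [partialConv, coordOp, groupConv]
  rw [← expect_expect_update a]
  simp only [expect_mul]
  rw [expect_comm]
  refine expect_congr rfl fun s _ ↦ expect_congr rfl fun t _ ↦ ?_
  have hpiecewise : (insert a S).piecewise (Function.update t a s) x =
      S.piecewise t (Function.update x a s) := by
    funext i
    by_cases hi : i = a
    · subst hi
      simp [ha]
    · by_cases hS : i ∈ S <;> simp [hi, hS]
  have hprod : ∏ i ∈ S, K i (x i - Function.update t a s i) =
      ∏ i ∈ S, K i (Function.update x a s i - t i) := by
    refine prod_congr rfl fun i hi ↦ ?_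
    have hia : i ≠ a := fun h ↦ ha (h ▸ hi)
    simp [hia]
  rw [prod_insert ha, hpiecewise, hprod, Function.update_self]
  ring

/-- The constant obtained by composing `s` operators that each lose one logarithm with
constants `C`, ending in `L log^k L`. -/
def iteratedLogConst (C : ℕ → ℝ) : ℕ → ℕ → ℝ
  | _, 0 => 1
  | k, s + 1 => C k * (1 + iteratedLogConst C (k + 1) s)

lemma iteratedLogConst_nonneg {C : ℕ → ℝ} (hC : ∀ k, 0 ≤ C k) (k s : ℕ) :
    0 ≤ iteratedLogConst C k s := by
  induction s generalizing k with
  | zero => exact zero_le_one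
  | succ s ih => exact mul_nonneg (hC k) (by linarith [ih (k + 1)])

variable {C : ℕ → ℝ} {W : ℝ} {B : Finset ι} {K : ι → G → ℝ}

lemma expect_logYoung_partialConv_le (hC : ∀ k, 0 ≤ C k)
    (hB : ∀ j ∈ B, IsLogBounded C W (groupConv (K j)))
    (hB' : ∀ j ∉ B, IsHingeContraction (groupConv (K j)))
    (S : Finset ι) (f : (ι → G) → ℝ) (k : ℕ) :
    𝔼 x, logYoung k |partialConv S K f x| ≤
      iteratedLogConst C k #(S ∩ B) * (1 + 𝔼 x, logYoung (k + #(S ∩ B)) |f x|) := by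
  induction S using Finset.induction_on generalizing k with
  | empty => simp [partialConv_empty, iteratedLogConst]
  | insert a S ha ih =>
    rw [partialConv_insert ha]
    by_cases haB : a ∈ B
    · have hcard : #(insert a S ∩ B) = #(S ∩ B) + 1 := by
        rw [insert_inter_of_mem haB, card_insert_of_notMem (by simp [ha])]
      rw [hcard, iteratedLogConst, mul_assoc, ← add_assoc, add_right_comm]
      refine (((hB a haB).coordOp a).expect_logYoung_le k _).trans
        (mul_le_mul_of_nonneg_left ?_ (hC k))
      linarith [ih (k + 1), expect_logYoung_abs_nonneg (k + 1 + #(S ∩ B)) f]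
    · rw [insert_inter_of_notMem haB]
      exact (((hB' a haB).coordOp a).expect_logYoung_le _ k).trans (ih k)

lemma mul_tailProb_partialConv_univ_le (hC : ∀ k, 0 ≤ C k) (hW : 0 ≤ W) (hne : B.Nonempty)
    (hB : ∀ j ∈ B, IsLogBounded C W (groupConv (K j)))
    (hB' : ∀ j ∉ B, IsHingeContraction (groupConv (K j)))
    (f : (ι → G) → ℝ) {l : ℝ} (hl : 0 < l) :
    l * tailProb (partialConv univ K f) l ≤
      W * (iteratedLogConst C 0 (#B - 1) * (1 + 𝔼 x, logYoung (#B - 1) |f x|)) := by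
  obtain ⟨b, hb⟩ := hne
  have hcard : #(univ.erase b ∩ B) = #B - 1 := by
    rw [erase_inter, univ_inter, card_erase_of_mem hb]
  have hmoment := expect_logYoung_partialConv_le hC hB hB' (univ.erase b) f 0
  rw [hcard, zero_add] at hmoment
  rw [← insert_erase (mem_univ b), partialConv_insert (notMem_erase b univ)]
  exact (((hB b hb).coordOp b).mul_tailProb_le _ l hl).trans
    (mul_le_mul_of_nonneg_left hmoment hW)

end Tensor

/-! ### Comparison of `logYoung` with `t log^k (1 + t)` -/

section LogComparison

open Finset

lemma add_one_le_three_mul_log {m : ℕ} {t : ℝ} (hm : 2 ^ m < t) :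
    (m : ℝ) + 1 ≤ 3 * Real.log (1 + t) := by
  have ht : 1 < t := (one_le_pow₀ one_le_two).trans_lt hm
  have hlog_two : Real.log 2 ≤ Real.log (1 + t) := Real.log_le_log two_pos (by linarith)
  have hlog_pow : m * Real.log 2 ≤ Real.log (1 + t) := by
    rw [← Real.log_pow]
    exact Real.log_le_log (by positivity) (by linarith)
  have hlog : 0.69 ≤ Real.log 2 := by linarith [Real.log_two_gt_d9]
  nlinarith [m.cast_nonneg (α := ℝ)]

lemma weightedHinges_le_mul_log_pow (k : ℕ) {t : ℝ} (ht : 0 ≤ t) :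
    weightedHinges k t ≤ (3 * Real.log (1 + t)) ^ (k + 1) * t := by
  set y := 3 * Real.log (1 + t)
  have hy : 0 ≤ y := mul_nonneg zero_le_three (Real.log_nonneg (by linarith))
  have hpow : t ≤ 2 ^ ⌊y⌋₊ := by
    by_contra! h
    exact absurd (add_one_le_three_mul_log h) (Nat.lt_floor_add_one y).not_ge
  have hterm (m : ℕ) (hm : m ∈ range ⌊y⌋₊) :
      ((m : ℝ) + 1) ^ k * max (t - 2 ^ m) 0 ≤ y ^ k * t := by
    have hmy : (m : ℝ) + 1 ≤ y :=
      (by exact_mod_cast mem_range.1 hm : (m : ℝ) + 1 ≤ ⌊y⌋₊).trans (Nat.floor_le hy)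
    gcongr
    exact max_le (sub_le_self t (by positivity)) ht
  calc weightedHinges k t
      = ∑ m ∈ range ⌊y⌋₊, ((m : ℝ) + 1) ^ k * max (t - 2 ^ m) 0 := weightedHinges_eq_sum k hpow
    _ ≤ ⌊y⌋₊ * (y ^ k * t) := by simpa using sum_le_sum hterm
    _ ≤ y * (y ^ k * t) := by gcongr; exact Nat.floor_le hy
    _ = y ^ (k + 1) * t := by ring

lemma logYoung_le_one_add_mul_log_pow (k : ℕ) {t : ℝ} (ht : 0 ≤ t) :
    logYoung k t ≤ 2 * 3 ^ k * (1 + t * Real.log (1 + t) ^ k) := by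
  cases k with
  | zero => simp only [logYoung, pow_zero]; linarith
  | succ k =>
    have hlog : 0 ≤ Real.log (1 + t) := Real.log_nonneg (by linarith)
    have hlinear : t ≤ 1 + (3 * Real.log (1 + t)) ^ (k + 1) * t := by
      rcases le_or_gt t 1 with h | h
      · exact h.trans (le_add_of_nonneg_right (by positivity))
      · have hy : 1 ≤ 3 * Real.log (1 + t) := by
          simpa using add_one_le_three_mul_log (m := 0) (by simpa using h)
        linarith [le_mul_of_one_le_left ht (one_le_pow₀ hy (n := k + 1))]
    have hthree : (1 : ℝ) ≤ 3 ^ (k + 1) := one_le_pow₀ (by norm_num)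
    have hhinges := weightedHinges_le_mul_log_pow k ht
    rw [mul_pow] at hlinear hhinges
    rw [logYoung]
    linarith

end LogComparison

/-! ### Averaging over the fibres of a finite-valued map -/

section FibreMean

open Finset
open scoped BigOperators

lemma integrable_hinge_abs {X : Type*} [MeasurableSpace X] {μ : Measure X} [IsFiniteMeasure μ]
    {f : X → ℝ} (hf : Integrable f μ) (l : ℝ) : Integrable (fun x ↦ max (|f x| - l) 0) μ :=
  (hf.abs.sub (integrable_const l)).pos_part

variable {X α : Type*} [MeasurableSpace X] [Fintype α] [MeasurableSpace α]
  {μ : Measure X} {φ : X → α} {f : X → ℝ}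

/-- A measurable map to a finite set whose fibres have at most their uniform share of the
measure. -/
structure HasUniformFibres (μ : Measure X) (φ : X → α) : Prop where
  measurable : Measurable φ
  measure_fibre_le : ∀ a, μ (φ ⁻¹' {a}) ≤ ENNReal.ofReal (Fintype.card α : ℝ)⁻¹

/-- The mean of `f` over the fibre of `φ` above `a`, normalised as if the fibre had measure
`1 / card α`. -/
def fibreMean (μ : Measure X) (φ : X → α) (f : X → ℝ) (a : α) : ℝ :=
  Fintype.card α * ∫ x in φ ⁻¹' {a}, f x ∂μ

lemma HasUniformFibres.measureReal_fibre_le (hφ : HasUniformFibres μ φ) (a : α) :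
    μ.real (φ ⁻¹' {a}) ≤ (Fintype.card α : ℝ)⁻¹ :=
  ENNReal.toReal_le_of_le_ofReal (by positivity) (hφ.measure_fibre_le a)

lemma HasUniformFibres.measureReal_preimage_le (hφ : HasUniformFibres μ φ) (P : α → Prop)
    [DecidablePred P] : μ.real {x | P (φ x)} ≤ 𝔼 a, if P a then (1 : ℝ) else 0 := by
  have hunion : {x | P (φ x)} = ⋃ a ∈ univ.filter P, φ ⁻¹' {a} := by
    ext x
    simp
  calc μ.real {x | P (φ x)}
      ≤ ∑ a ∈ univ.filter P, μ.real (φ ⁻¹' {a}) := by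
        rw [hunion]
        exact measureReal_biUnion_finset_le _ _
    _ ≤ ∑ _a ∈ univ.filter P, (Fintype.card α : ℝ)⁻¹ :=
        sum_le_sum fun a _ ↦ hφ.measureReal_fibre_le a
    _ = 𝔼 a, if P a then (1 : ℝ) else 0 := by
        rw [Fintype.expect_eq_sum_div_card, sum_boole, sum_const, nsmul_eq_mul, div_eq_mul_inv]

lemma HasUniformFibres.hinge_fibreMean_le [IsFiniteMeasure μ] (hφ : HasUniformFibres μ φ)
    (hf : Integrable f μ) {l : ℝ} (hl : 0 ≤ l) (a : α) :
    max (|fibreMean μ φ f a| - l) 0 ≤ fibreMean μ φ (fun x ↦ max (|f x| - l) 0) a := by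
  have hint := integrable_hinge_abs hf l
  have : Nonempty α := ⟨a⟩
  have hcard : (0 : ℝ) < Fintype.card α := by exact_mod_cast Fintype.card_pos
  refine max_le ?_ (mul_nonneg hcard.le (integral_nonneg fun x ↦ le_max_right _ _))
  have hintegral : |∫ x in φ ⁻¹' {a}, f x ∂μ| ≤
      ∫ x in φ ⁻¹' {a}, max (|f x| - l) 0 ∂μ + (Fintype.card α : ℝ)⁻¹ * l :=
    calc |∫ x in φ ⁻¹' {a}, f x ∂μ|
        ≤ ∫ x in φ ⁻¹' {a}, |f x| ∂μ := abs_integral_le_integral_abs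
      _ ≤ ∫ x in φ ⁻¹' {a}, (max (|f x| - l) 0 + l) ∂μ :=
          integral_mono hf.abs.integrableOn (hint.integrableOn.add (integrable_const l))
            fun x ↦ sub_le_iff_le_add.1 (le_max_left (|f x| - l) 0)
      _ = ∫ x in φ ⁻¹' {a}, max (|f x| - l) 0 ∂μ + μ.real (φ ⁻¹' {a}) * l := by
          rw [integral_add hint.integrableOn (integrable_const l), setIntegral_const, smul_eq_mul]
      _ ≤ _ := by
          gcongr
          exact hφ.measureReal_fibre_le a
  have hscaled := mul_le_mul_of_nonneg_left hintegral hcard.le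
  rw [mul_add, mul_inv_cancel_left₀ hcard.ne'] at hscaled
  rw [fibreMean, fibreMean, abs_mul, abs_of_pos hcard]
  linarith

variable [MeasurableSingletonClass α]

lemma integral_eq_sum_setIntegral_fibre (hφ : Measurable φ) (hf : Integrable f μ) :
    ∫ x, f x ∂μ = ∑ a, ∫ x in φ ⁻¹' {a}, f x ∂μ := by
  rw [← integral_iUnion_fintype (fun a ↦ hφ (measurableSet_singleton a))
      (fun a b hab ↦ Disjoint.preimage φ (by simpa using hab)) fun a ↦ hf.integrableOn,
    ← Set.preimage_iUnion, Set.iUnion_of_singleton, Set.preimage_univ, setIntegral_univ]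

lemma integral_eq_expect_fibreMean [Nonempty α] (hφ : Measurable φ) (hf : Integrable f μ) :
    ∫ x, f x ∂μ = 𝔼 a, fibreMean μ φ f a := by
  simp only [fibreMean]
  rw [← mul_expect, Fintype.card_mul_expect, integral_eq_sum_setIntegral_fibre hφ hf]

lemma fibreMean_mul_comp (hφ : Measurable φ) (f : X → ℝ) (c : α → ℝ) (a : α) :
    fibreMean μ φ (fun x ↦ f x * c (φ x)) a = fibreMean μ φ f a * c a := by
  have hfibre : Set.EqOn (fun x ↦ f x * c (φ x)) (fun x ↦ f x * c a) (φ ⁻¹' {a}) := by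
    rintro x rfl
    rfl
  rw [fibreMean, setIntegral_congr_fun (hφ (measurableSet_singleton a)) hfibre,
    integral_mul_const, fibreMean, mul_assoc]

lemma integral_mul_comp_eq_expect [Nonempty α] (hφ : Measurable φ) (hf : Integrable f μ)
    (c : α → ℝ) : ∫ x, f x * c (φ x) ∂μ = 𝔼 a, fibreMean μ φ f a * c a := by
  have hint : Integrable (fun x ↦ f x * c (φ x)) μ :=
    hf.mul_bdd (c := ∑ a, |c a|) ((measurable_of_finite c).comp hφ).aestronglyMeasurable
      (ae_of_all μ fun x ↦
        single_le_sum (f := fun a ↦ |c a|) (fun a _ ↦ abs_nonneg (c a)) (mem_univ (φ x)))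
  rw [integral_eq_expect_fibreMean hφ hint]
  exact expect_congr rfl fun a _ ↦ fibreMean_mul_comp hφ f c a

variable [IsFiniteMeasure μ] [Nonempty α]

lemma HasUniformFibres.expect_hinge_fibreMean_le (hφ : HasUniformFibres μ φ)
    (hf : Integrable f μ) {l : ℝ} (hl : 0 ≤ l) :
    𝔼 a, max (|fibreMean μ φ f a| - l) 0 ≤ ∫ x, max (|f x| - l) 0 ∂μ := by
  rw [integral_eq_expect_fibreMean hφ.measurable (integrable_hinge_abs hf l)]
  exact expect_le_expect fun a _ ↦ hφ.hinge_fibreMean_le hf hl a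

lemma HasUniformFibres.expect_abs_fibreMean_le (hφ : HasUniformFibres μ φ)
    (hf : Integrable f μ) : 𝔼 a, |fibreMean μ φ f a| ≤ ∫ x, |f x| ∂μ := by
  simpa using hφ.expect_hinge_fibreMean_le hf le_rfl

lemma HasUniformFibres.expect_weightedHinges_fibreMean_le (hφ : HasUniformFibres μ φ)
    (hf : Integrable f μ) {k : ℕ} (hint : Integrable (fun x ↦ weightedHinges k |f x|) μ) :
    𝔼 a, weightedHinges k |fibreMean μ φ f a| ≤ ∫ x, weightedHinges k |f x| ∂μ := by
  obtain ⟨M, hM⟩ := exists_forall_le_two_pow fun a ↦ |fibreMean μ φ f a|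
  have hhinge (m : ℕ) (_ : m ∈ range M) :
      Integrable (fun x ↦ ((m : ℝ) + 1) ^ k * max (|f x| - 2 ^ m) 0) μ :=
    (integrable_hinge_abs hf _).const_mul _
  calc 𝔼 a, weightedHinges k |fibreMean μ φ f a|
      = ∑ m ∈ range M, ((m : ℝ) + 1) ^ k * 𝔼 a, max (|fibreMean μ φ f a| - 2 ^ m) 0 := by
        simp only [weightedHinges_eq_sum k (hM _), expect_sum_comm, mul_expect]
    _ ≤ ∑ m ∈ range M, ((m : ℝ) + 1) ^ k * ∫ x, max (|f x| - 2 ^ m) 0 ∂μ :=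
        sum_le_sum fun m _ ↦ mul_le_mul_of_nonneg_left
          (hφ.expect_hinge_fibreMean_le hf (by positivity)) (by positivity)
    _ = ∫ x, ∑ m ∈ range M, ((m : ℝ) + 1) ^ k * max (|f x| - 2 ^ m) 0 ∂μ := by
        simp only [integral_finsetSum _ hhinge, integral_const_mul]
    _ ≤ _ := integral_mono (integrable_finsetSum _ hhinge) hint
        fun x ↦ sum_le_weightedHinges k M _

lemma HasUniformFibres.expect_logYoung_fibreMean_le (hφ : HasUniformFibres μ φ)
    (hf : Integrable f μ) {k : ℕ} (hint : Integrable (fun x ↦ logYoung k |f x|) μ) :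
    𝔼 a, logYoung k |fibreMean μ φ f a| ≤ ∫ x, logYoung k |f x| ∂μ := by
  cases k with
  | zero => exact hφ.expect_abs_fibreMean_le hf
  | succ k =>
    have hhinges : Integrable (fun x ↦ weightedHinges k |f x|) μ := by
      simpa [logYoung, Pi.sub_def] using hint.sub hf.abs
    simp only [logYoung]
    rw [expect_add_distrib, integral_add hf.abs hhinges]
    exact add_le_add (hφ.expect_abs_fibreMean_le hf)
      (hφ.expect_weightedHinges_fibreMean_le hf hhinges)

end FibreMean

section LogYoungIntegral

variable {X : Type*} [MeasurableSpace X] {μ : Measure X} {f : X → ℝ} {k : ℕ}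

lemma integral_abs_mul_log_pow_nonneg (f : X → ℝ) (k : ℕ) :
    0 ≤ ∫ x, |f x| * Real.log (1 + |f x|) ^ k ∂μ :=
  integral_nonneg fun x ↦
    mul_nonneg (abs_nonneg _) (pow_nonneg (Real.log_nonneg (by linarith [abs_nonneg (f x)])) k)

lemma integrable_logYoung_abs [IsFiniteMeasure μ] (hf : AEStronglyMeasurable f μ)
    (hlog : Integrable (fun x ↦ |f x| * Real.log (1 + |f x|) ^ k) μ) :
    Integrable (fun x ↦ logYoung k |f x|) μ := by
  have hmeas : AEStronglyMeasurable (fun x ↦ logYoung k |f x|) μ :=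
    ((logYoung_mono k).measurable.comp_aemeasurable hf.norm.aemeasurable).aestronglyMeasurable
  refine (((integrable_const 1).add hlog).const_mul (2 * 3 ^ k)).mono' hmeas
    (ae_of_all μ fun x ↦ ?_)
  rw [Real.norm_eq_abs, abs_of_nonneg ((abs_nonneg _).trans (le_logYoung k _))]
  exact logYoung_le_one_add_mul_log_pow k (abs_nonneg _)

lemma integral_logYoung_abs_le [IsProbabilityMeasure μ] (hf : AEStronglyMeasurable f μ)
    (hlog : Integrable (fun x ↦ |f x| * Real.log (1 + |f x|) ^ k) μ) :
    ∫ x, logYoung k |f x| ∂μ ≤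
      2 * 3 ^ k * (1 + ∫ x, |f x| * Real.log (1 + |f x|) ^ k ∂μ) := by
  calc ∫ x, logYoung k |f x| ∂μ
      ≤ ∫ x, 2 * 3 ^ k * (1 + |f x| * Real.log (1 + |f x|) ^ k) ∂μ :=
        integral_mono (integrable_logYoung_abs hf hlog)
          (((integrable_const 1).add hlog).const_mul _)
          fun x ↦ logYoung_le_one_add_mul_log_pow k (abs_nonneg _)
    _ = _ := by
        rw [integral_const_mul, integral_add (integrable_const 1) hlog, integral_const,
          probReal_univ, one_smul]

end LogYoungIntegral

/-! ### Binary digits -/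

section BinaryDigits

lemma floor_two_mul (y : ℝ) : ⌊2 * y⌋ = 2 * ⌊y⌋ + if Int.fract y < 1 / 2 then 0 else 1 := by
  have hnonneg := Int.fract_nonneg y
  have hlt := Int.fract_lt_one y
  have hadd := Int.floor_add_fract y
  rw [Int.floor_eq_iff]
  split_ifs <;> push_cast <;> constructor <;> linarith

/-- The first `N` binary digits of `x`, most significant first. -/
def binaryDigits (N : ℕ) (x : ℝ) : DyadicGroup N := fun j ↦ (⌊2 ^ ((j : ℕ) + 1) * x⌋ : ZMod 2)

variable {N : ℕ}

lemma binaryDigits_apply (x : ℝ) (j : Fin N) :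
    binaryDigits N x j = if Int.fract (2 ^ (j : ℕ) * x) < 1 / 2 then 0 else 1 := by
  rw [binaryDigits, pow_succ', mul_assoc, floor_two_mul]
  push_cast
  rw [(CharTwo.two_eq_zero : (2 : ZMod 2) = 0), zero_mul, zero_add]

lemma rademacher_eq_digitSign {j : ℕ} (hj : j < N) (x : ℝ) :
    rademacher j x = digitSign (binaryDigits N x) j := by
  rw [rademacher, r0, digitSign, dif_pos hj, binaryDigits_apply]
  simp

lemma walsh_eq_walshProd {k : ℕ} (hk : k < 2 ^ N) (x : ℝ) :
    walsh k x = walshProd (digitSign (binaryDigits N x)) k :=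
  walshProd_congr (r := fun j ↦ rademacher j x) (fun _ hj ↦ rademacher_eq_digitSign hj x) hk

lemma floor_two_pow_mul_eq_of_binaryDigits_eq {x y : ℝ} (hfloor : ⌊x⌋ = ⌊y⌋)
    (h : binaryDigits N x = binaryDigits N y) {j : ℕ} (hj : j ≤ N) :
    ⌊2 ^ j * x⌋ = ⌊2 ^ j * y⌋ := by
  induction j with
  | zero => simpa using hfloor
  | succ j ih =>
    have hdigit := congrFun h ⟨j, hj⟩
    rw [binaryDigits_apply, binaryDigits_apply] at hdigit
    rw [pow_succ', mul_assoc, mul_assoc, floor_two_mul, floor_two_mul, ih (by lia)]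
    split_ifs at hdigit ⊢ <;> simp_all

lemma abs_sub_le_of_binaryDigits_eq {x y : ℝ} (hfloor : ⌊x⌋ = ⌊y⌋)
    (h : binaryDigits N x = binaryDigits N y) : |x - y| ≤ (1 / 2) ^ N := by
  have hlt := Int.abs_sub_lt_one_of_floor_eq_floor
    (floor_two_pow_mul_eq_of_binaryDigits_eq hfloor h le_rfl)
  rw [← mul_sub, abs_mul, abs_of_pos (by positivity : (0 : ℝ) < 2 ^ N)] at hlt
  rw [one_div_pow, le_div_iff₀' (by positivity)]
  exact hlt.le

lemma measurable_binaryDigits (N : ℕ) : Measurable (binaryDigits N) :=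
  measurable_pi_lambda _ fun _ ↦ (measurable_of_countable fun z : ℤ ↦ (z : ZMod 2)).comp
    (Int.measurable_floor.comp (measurable_id.const_mul _))

lemma volume_Ico_inter_binaryDigits_fibre_le (a : DyadicGroup N) :
    volume (Set.Ico (0 : ℝ) 1 ∩ binaryDigits N ⁻¹' {a}) ≤ ENNReal.ofReal ((1 / 2) ^ N) := by
  refine (Real.volume_le_diam _).trans (Metric.ediam_le fun x hx y hy ↦ ?_)
  rw [edist_dist, Real.dist_eq]
  refine ENNReal.ofReal_le_ofReal (abs_sub_le_of_binaryDigits_eq ?_ (hx.2.trans hy.2.symm))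
  rw [Int.floor_eq_zero_iff.2 hx.1, Int.floor_eq_zero_iff.2 hy.1]

/-- The first `N` binary digits of each coordinate. -/
def cubeDigits (d N : ℕ) (x : Fin d → ℝ) : Fin d → DyadicGroup N := fun i ↦ binaryDigits N (x i)

instance isProbabilityMeasure_cubeMeasure (d : ℕ) : IsProbabilityMeasure (cubeMeasure d) where
  measure_univ := by
    rw [cubeMeasure, unitCube, Measure.restrict_apply_univ, volume_pi_pi]
    simp

lemma hasUniformFibres_cubeDigits (d N : ℕ) :
    HasUniformFibres (cubeMeasure d) (cubeDigits d N) where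
  measurable :=
    measurable_pi_lambda _ fun i ↦ (measurable_binaryDigits N).comp (measurable_pi_apply i)
  measure_fibre_le a := by
    have hfibre : cubeDigits d N ⁻¹' {a} ∩ (Set.univ.pi fun _ ↦ Set.Ico (0 : ℝ) 1) =
        Set.univ.pi fun i ↦ Set.Ico (0 : ℝ) 1 ∩ binaryDigits N ⁻¹' {a i} := by
      ext x
      simp only [Set.mem_inter_iff, Set.mem_preimage, Set.mem_singleton_iff,
        Set.mem_univ_pi, forall_and, cubeDigits, funext_iff, and_comm]
    rw [cubeMeasure, unitCube,
      Measure.restrict_apply' (MeasurableSet.univ_pi fun _ ↦ measurableSet_Ico), hfibre,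
      volume_pi_pi]
    refine (Finset.prod_le_prod' fun i _ ↦
      volume_Ico_inter_binaryDigits_fibre_le (a i)).trans_eq ?_
    rw [Finset.prod_const, ← ENNReal.ofReal_pow (by positivity)]
    congr 1
    simp [ZMod.card]

end BinaryDigits

/-! ### Logarithmic means as convolutions on the dyadic group -/

section MixedMeans

open Finset
open scoped BigOperators

variable {d N : ℕ} {f : (Fin d → ℝ) → ℝ}

lemma walshCoef_eq_expect (hf : Integrable f (cubeMeasure d)) {j : Fin d → ℕ}
    (hj : ∀ i, j i < 2 ^ N) :
    walshCoef f j = 𝔼 g, fibreMean (cubeMeasure d) (cubeDigits d N) f g *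
      ∏ i, walshProd (digitSign (g i)) (j i) := by
  rw [← integral_mul_comp_eq_expect (hasUniformFibres_cubeDigits d N).measurable hf
    fun g ↦ ∏ i, walshProd (digitSign (g i)) (j i)]
  simp only [walshCoef, walsh_eq_walshProd (hj _), cubeDigits]

lemma rectPartialSum_eq_expect (hf : Integrable f (cubeMeasure d)) {m : Fin d → ℕ}
    (hm : ∀ i, m i ≤ 2 ^ N) (x : Fin d → ℝ) :
    rectPartialSum f m x = 𝔼 g, fibreMean (cubeMeasure d) (cubeDigits d N) f g *
      ∏ i, dirichletSum (digitSign (cubeDigits d N x i - g i)) (m i) := by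
  have hterm (j) (hj : j ∈ Fintype.piFinset fun i ↦ range (m i)) :
      walshCoef f j * ∏ i, walsh (j i) (x i) =
        𝔼 g, fibreMean (cubeMeasure d) (cubeDigits d N) f g *
          ∏ i, walshProd (digitSign (cubeDigits d N x i - g i)) (j i) := by
    have hj' (i) : j i < 2 ^ N := (mem_range.1 (Fintype.mem_piFinset.1 hj i)).trans_le (hm i)
    simp only [walshCoef_eq_expect hf hj', walsh_eq_walshProd (hj' _), expect_mul,
      walshProd_digitSign_sub, prod_mul_distrib, cubeDigits]
    exact expect_congr rfl fun g _ ↦ by ring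
  rw [rectPartialSum, sum_congr rfl hterm, ← expect_sum_comm]
  simp only [dirichletSum, prod_univ_sum, mul_sum]

/-- The kernel acting on the `a`-th variable in the mixed logarithmic mean. The factor `4`
absorbs the absolute constants of the one-dimensional kernel bounds. -/
def mixedKernel (B : Finset (Fin d)) (n : Fin d → ℕ) (a : Fin d) (y : DyadicGroup N) : ℝ :=
  (4 * logSum (n a))⁻¹ *
    if a ∈ B then norlundSum (digitSign y) (n a) else rieszSum (digitSign y) (n a)

lemma mixedKernel_eq_sum (B : Finset (Fin d)) (n : Fin d → ℕ) (a : Fin d) (y : DyadicGroup N) :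
    mixedKernel B n a y = 4⁻¹ * ((logSum (n a))⁻¹ *
      ∑ i ∈ Ico 1 (n a), dirichletSum (digitSign y) (if a ∈ B then n a - i else i) / i) := by
  rw [mixedKernel, mul_inv, mul_assoc]
  split_ifs <;> rfl

lemma mixedLogMean_eq_partialConv (B : Finset (Fin d)) (hf : Integrable f (cubeMeasure d))
    {n : Fin d → ℕ} (hn : ∀ j, n j < 2 ^ N) (x : Fin d → ℝ) :
    mixedLogMean B f n x = 4 ^ d * partialConv univ (mixedKernel B n)
      (fibreMean (cubeMeasure d) (cubeDigits d N) f) (cubeDigits d N x) := by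
  have hterm (i) (hi : i ∈ Fintype.piFinset fun j ↦ Ico 1 (n j)) :
      rectPartialSum f (fun j ↦ if j ∈ B then n j - i j else i j) x / ∏ j, (i j : ℝ) =
        𝔼 g, fibreMean (cubeMeasure d) (cubeDigits d N) f g *
          ∏ j, (dirichletSum (digitSign (cubeDigits d N x j - g j))
            (if j ∈ B then n j - i j else i j) / (i j : ℝ)) := by
    have hbound (j) : (if j ∈ B then n j - i j else i j) ≤ 2 ^ N := by
      have hij := mem_Ico.1 (Fintype.mem_piFinset.1 hi j)
      have hnj := hn j
      split_ifs <;> lia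
    simp only [rectPartialSum_eq_expect hf hbound, expect_div, prod_div_distrib, mul_div_assoc]
  have hprod (g : Fin d → DyadicGroup N) :
      4 ^ d * ∏ j, mixedKernel B n j (cubeDigits d N x j - g j) = (∏ j, logSum (n j))⁻¹ *
        ∑ i ∈ Fintype.piFinset fun j ↦ Ico 1 (n j),
          ∏ j, (dirichletSum (digitSign (cubeDigits d N x j - g j))
            (if j ∈ B then n j - i j else i j) / (i j : ℝ)) := by
    simp only [mixedKernel_eq_sum, prod_mul_distrib, prod_univ_sum, prod_const, card_univ,
      Fintype.card_fin, prod_inv_distrib, inv_pow]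
    rw [mul_inv_cancel_left₀ (by positivity)]
  rw [mixedLogMean, sum_congr rfl hterm, ← expect_sum_comm, partialConv, mul_expect, mul_expect]
  refine expect_congr rfl fun g _ ↦ ?_
  rw [piecewise_univ, ← mul_sum, mul_left_comm, mul_left_comm (4 ^ d), hprod]

lemma isLogBounded_groupConv_mixedKernel {B : Finset (Fin d)} {n : Fin d → ℕ} {j : Fin d}
    (hj : j ∈ B) (hn : n j < 2 ^ N) (h2 : 2 ≤ n j) :
    IsLogBounded martTransformConst 3 (groupConv (mixedKernel (N := N) B n j)) := by
  have hkernel : mixedKernel (N := N) B n j =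
      fun y ↦ (4 * logSum (n j))⁻¹ * norlundSum (digitSign y) (n j) :=
    funext fun y ↦ by rw [mixedKernel, if_pos hj]
  exact hkernel ▸ isLogBounded_groupConv_norlundSum hn h2

lemma isHingeContraction_groupConv_mixedKernel {B : Finset (Fin d)} {n : Fin d → ℕ} {j : Fin d}
    (hj : j ∉ B) (hn : n j < 2 ^ N) (h2 : 2 ≤ n j) :
    IsHingeContraction (groupConv (mixedKernel (N := N) B n j)) := by
  have hkernel : mixedKernel (N := N) B n j =
      fun y ↦ (4 * logSum (n j))⁻¹ * rieszSum (digitSign y) (n j) :=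
    funext fun y ↦ by rw [mixedKernel, if_neg hj]
  exact hkernel ▸ isHingeContraction_groupConv_rieszSum hn h2

lemma mul_measureReal_mixedLogMean_le_tailProb (B : Finset (Fin d))
    (hf : Integrable f (cubeMeasure d)) {n : Fin d → ℕ} (hn : ∀ j, n j < 2 ^ N) {lam : ℝ}
    (hlam : 0 < lam) :
    lam * (cubeMeasure d).real {x | lam < |mixedLogMean B f n x|} ≤
      4 ^ d * (lam / 4 ^ d * tailProb (partialConv univ (mixedKernel B n)
        (fibreMean (cubeMeasure d) (cubeDigits d N) f)) (lam / 4 ^ d)) := by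
  have hset : {x | lam < |mixedLogMean B f n x|} =
      {x | lam / 4 ^ d < |partialConv univ (mixedKernel B n)
        (fibreMean (cubeMeasure d) (cubeDigits d N) f) (cubeDigits d N x)|} := by
    ext x
    rw [Set.mem_ofPred_eq, Set.mem_ofPred_eq, mixedLogMean_eq_partialConv B hf hn, abs_mul,
      abs_of_pos (by positivity), div_lt_iff₀' (by positivity)]
  rw [hset, ← mul_assoc, mul_div_cancel₀ _ (by positivity)]
  exact mul_le_mul_of_nonneg_left
    ((hasUniformFibres_cubeDigits d N).measureReal_preimage_le fun g ↦ lam / 4 ^ d <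
      |partialConv univ (mixedKernel B n) (fibreMean (cubeMeasure d) (cubeDigits d N) f) g|)
    hlam.le

/-- The constant in the weak type estimate for mixed means with `b` Nörlund factors. -/
def weakTypeConst (d b : ℕ) : ℝ :=
  4 ^ d * (3 * (iteratedLogConst martTransformConst 0 (b - 1) * (1 + 2 * 3 ^ (b - 1))))

lemma iteratedLogConst_martTransformConst_nonneg (k s : ℕ) :
    0 ≤ iteratedLogConst martTransformConst k s :=
  iteratedLogConst_nonneg (fun k ↦ zero_le_one.trans (one_le_martTransformConst k)) k s

lemma weakTypeConst_nonneg (d b : ℕ) : 0 ≤ weakTypeConst d b := by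
  have hconst := iteratedLogConst_martTransformConst_nonneg 0 (b - 1)
  unfold weakTypeConst
  positivity

lemma mul_measureReal_mixedLogMean_le {B : Finset (Fin d)} (hB : B.Nonempty)
    (hf : Integrable f (cubeMeasure d))
    (hlog : Integrable (fun x ↦ |f x| * Real.log (1 + |f x|) ^ (#B - 1)) (cubeMeasure d))
    {n : Fin d → ℕ} (hn : ∀ j, 2 ≤ n j) {lam : ℝ} (hlam : 0 < lam) :
    lam * (cubeMeasure d).real {x | lam < |mixedLogMean B f n x|} ≤
      weakTypeConst d #B *
        (1 + ∫ x, |f x| * Real.log (1 + |f x|) ^ (#B - 1) ∂(cubeMeasure d)) := by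
  obtain ⟨N, hN⟩ : ∃ N, ∀ j, n j < 2 ^ N :=
    ⟨∑ j, n j, fun j ↦ (single_le_sum_of_canonicallyOrdered (mem_univ j)).trans_lt
      Nat.lt_two_pow_self⟩
  set J := ∫ x, |f x| * Real.log (1 + |f x|) ^ (#B - 1) ∂(cubeMeasure d)
  set fN := fibreMean (cubeMeasure d) (cubeDigits d N) f
  have hJ : 0 ≤ J := integral_abs_mul_log_pow_nonneg f _
  have hconst := iteratedLogConst_martTransformConst_nonneg 0 (#B - 1)
  have hmoment : 𝔼 g, logYoung (#B - 1) |fN g| ≤ 2 * 3 ^ (#B - 1) * (1 + J) :=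
    ((hasUniformFibres_cubeDigits d N).expect_logYoung_fibreMean_le hf
      (integrable_logYoung_abs hf.1 hlog)).trans (integral_logYoung_abs_le hf.1 hlog)
  have hweak := mul_tailProb_partialConv_univ_le
    (fun k ↦ zero_le_one.trans (one_le_martTransformConst k)) zero_le_three hB
    (fun j hj ↦ isLogBounded_groupConv_mixedKernel (n := n) hj (hN j) (hn j))
    (fun j hj ↦ isHingeContraction_groupConv_mixedKernel hj (hN j) (hn j)) fN
    (div_pos hlam (by positivity : (0 : ℝ) < 4 ^ d))
  calc lam * (cubeMeasure d).real {x | lam < |mixedLogMean B f n x|}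
      ≤ 4 ^ d * (3 * (iteratedLogConst martTransformConst 0 (#B - 1) *
          (1 + 𝔼 g, logYoung (#B - 1) |fN g|))) :=
        (mul_measureReal_mixedLogMean_le_tailProb B hf hN hlam).trans
          (mul_le_mul_of_nonneg_left hweak (by positivity))
    _ ≤ 4 ^ d * (3 * (iteratedLogConst martTransformConst 0 (#B - 1) *
          ((1 + 2 * 3 ^ (#B - 1)) * (1 + J)))) := by
        gcongr
        linarith
    _ = weakTypeConst d #B * (1 + J) := by
        rw [weakTypeConst]
        ring

end MixedMeans

/-- Theorem (logest2). For nonempty `B ⊆ D`, the mixed logarithmic means map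
`L log^{|B|-1} L(I^d)` into `weak-L^1(I^d)`, with a constant depending only on `d`. -/
theorem stmt4 (d : ℕ) (hd : 1 ≤ d) :
    ∃ C > (0:ℝ), ∀ B : Finset (Fin d), B.Nonempty →
      ∀ f : (Fin d → ℝ) → ℝ, Measurable f → Integrable f (cubeMeasure d) →
        Integrable (fun x => |f x| * Real.log (1 + |f x|) ^ (B.card - 1)) (cubeMeasure d) →
        ∀ n : Fin d → ℕ, (∀ j, 2 ≤ n j) → ∀ lam > (0:ℝ),
          lam * ((cubeMeasure d) {x | lam < |mixedLogMean B f n x|}).toReal ≤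
            C * (1 + ∫ x, |f x| * Real.log (1 + |f x|) ^ (B.card - 1) ∂(cubeMeasure d)) := by
  have hnonneg : 0 ≤ ∑ b ∈ Finset.range (d + 1), weakTypeConst d b :=
    Finset.sum_nonneg fun b _ ↦ weakTypeConst_nonneg d b
  refine ⟨1 + ∑ b ∈ Finset.range (d + 1), weakTypeConst d b, by linarith, ?_⟩
  intro B hB f _ hf hlog n hn lam hlam
  have hconst : weakTypeConst d B.card ≤ ∑ b ∈ Finset.range (d + 1), weakTypeConst d b := by
    refine Finset.single_le_sum (fun b _ ↦ weakTypeConst_nonneg d b) (Finset.mem_range.2 ?_)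
    simpa using Nat.lt_succ_of_le B.card_le_univ
  refine (mul_measureReal_mixedLogMean_le hB hf hlog hn hlam).trans
    (mul_le_mul_of_nonneg_right (by linarith) ?_)
  exact add_nonneg zero_le_one (integral_abs_mul_log_pow_nonneg f _)

end
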